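/- There is a constant c (independent of the game) such that every coordination game without bonuses on an unweighted closed chain of m cycles, each cycle having n nodes, admits, from every joint strategy, a finite c-improvement path of length at most c·n·m³ (hence ending in a strong equilibrium). -/

import Mathlib

open scoped Classical

namespace CG

/-- Payoff of node `i` in a coordination game on a weighted directed graph
with adjacency `adj` (an edge `j → i` is `adj j i`), edge weights `w`,
bonuses `β`, under the joint strategy `s`. -/
noncomputable def payoff {V M : Type} [Fintype V] (adj : V → V → Prop)
    (w : V → V → ℝ) (β : V → M → ℕ) (s : V → M) (i : V) : ℝ :=
  (∑ j ∈ Finset.univ.filter (fun j => adj j i ∧ s j = s i), w j i) + (β i (s i) : ℝ)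

/-- A joint strategy assigns to every node a colour from its colour set. -/
def Valid {V M : Type} (C : V → Finset M) (s : V → M) : Prop :=
  ∀ i, s i ∈ C i

/-- `s'` is a profitable deviation of the (non-empty) coalition
`K = {i | s i ≠ s' i}` from `s`. -/
def ProfDev {V M : Type} [Fintype V] (adj : V → V → Prop) (w : V → V → ℝ)
    (β : V → M → ℕ) (C : V → Finset M) (s s' : V → M) : Prop :=
  Valid C s' ∧ s ≠ s' ∧
    ∀ i, s i ≠ s' i → payoff adj w β s i < payoff adj w β s' i

/-- A profitable deviation of a single player. -/
def UniDev {V M : Type} [Fintype V] (adj : V → V → Prop) (w : V → V → ℝ)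
    (β : V → M → ℕ) (C : V → Finset M) (s s' : V → M) : Prop :=
  ProfDev adj w β C s s' ∧ ∃ i, ∀ j, j ≠ i → s j = s' j

/-- A Nash equilibrium: no single player has a profitable deviation. -/
def IsNash {V M : Type} [Fintype V] (adj : V → V → Prop) (w : V → V → ℝ)
    (β : V → M → ℕ) (C : V → Finset M) (s : V → M) : Prop :=
  Valid C s ∧ ∀ s', ¬ UniDev adj w β C s s'

/-- A strong equilibrium: no coalition has a profitable deviation. -/
def IsStrong {V M : Type} [Fintype V] (adj : V → V → Prop) (w : V → V → ℝ)
    (β : V → M → ℕ) (C : V → Finset M) (s : V → M) : Prop :=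
  Valid C s ∧ ∀ s', ¬ ProfDev adj w β C s s'

/-- There is a finite improvement path of length `L` starting at `s`
(each step a profitable single-player deviation) ending in a Nash equilibrium. -/
def ImpPath {V M : Type} [Fintype V] (adj : V → V → Prop) (w : V → V → ℝ)
    (β : V → M → ℕ) (C : V → Finset M) (s : V → M) (L : ℕ) : Prop :=
  ∃ σ : ℕ → V → M, σ 0 = s ∧
    (∀ t, t < L → UniDev adj w β C (σ t) (σ (t + 1))) ∧
    IsNash adj w β C (σ L)

/-- There is a finite c-improvement path of length `L` starting at `s`
(each step a profitable coalition deviation) ending in a strong equilibrium. -/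
def CImpPath {V M : Type} [Fintype V] (adj : V → V → Prop) (w : V → V → ℝ)
    (β : V → M → ℕ) (C : V → Finset M) (s : V → M) (L : ℕ) : Prop :=
  ∃ σ : ℕ → V → M, σ 0 = s ∧
    (∀ t, t < L → ProfDev adj w β C (σ t) (σ (t + 1))) ∧
    IsStrong adj w β C (σ L)

/-- Adjacency of the simple cycle `1 → 2 → ⋯ → n → 1` on `Fin n`. -/
def cycAdj (n : ℕ) : Fin n → Fin n → Prop :=
  fun i j => (i.val + 1) % n = j.val

/-- Adjacency of a chain of `m` cycles, each of `n` nodes: `node j i` is the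
`(i+1)`-st node of the `(j+1)`-st cycle (`0`-based indices). -/
def chainAdj {V : Type} (m n : ℕ) (node : ℕ → ℕ → V) : V → V → Prop :=
  fun u v => ∃ j i, j < m ∧ i < n ∧ u = node j i ∧ v = node j ((i + 1) % n)

/-- `node`, `k` describe an open chain of `m ≥ 2` simple cycles, each on `n ≥ 3`
nodes, where consecutive cycles `C_j, C_{j+1}` share exactly the node
`node j 0 = node (j+1) (k j)` (with `1 ≤ k j < n`) and the cycles are
otherwise pairwise disjoint, and every vertex lies on some cycle. -/
def IsOpenChain {V : Type} (m n : ℕ) (node : ℕ → ℕ → V) (k : ℕ → ℕ) : Prop :=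
  2 ≤ m ∧ 3 ≤ n ∧
  (∀ j, j + 1 < m → 1 ≤ k j ∧ k j < n) ∧
  (∀ j, j + 1 < m → node j 0 = node (j + 1) (k j)) ∧
  (∀ j i j' i', j < m → i < n → j' < m → i' < n → node j i = node j' i' →
      (j = j' ∧ i = i') ∨ (j' = j + 1 ∧ i = 0 ∧ i' = k j) ∨
      (j = j' + 1 ∧ i' = 0 ∧ i = k j')) ∧
  (∀ v : V, ∃ j i, j < m ∧ i < n ∧ node j i = v)

/-- As `IsOpenChain`, but additionally the last cycle shares exactly the node
`node (m-1) 0 = node 0 (k (m-1))` with the first one. -/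
def IsClosedChain {V : Type} (m n : ℕ) (node : ℕ → ℕ → V) (k : ℕ → ℕ) : Prop :=
  2 ≤ m ∧ 3 ≤ n ∧
  (∀ j, j < m → 1 ≤ k j ∧ k j < n) ∧
  (∀ j, j + 1 < m → node j 0 = node (j + 1) (k j)) ∧
  node (m - 1) 0 = node 0 (k (m - 1)) ∧
  (∀ j i j' i', j < m → i < n → j' < m → i' < n → node j i = node j' i' →
      (j = j' ∧ i = i') ∨ (j' = j + 1 ∧ i = 0 ∧ i' = k j) ∨
      (j = j' + 1 ∧ i' = 0 ∧ i = k j') ∨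
      (j = m - 1 ∧ j' = 0 ∧ i = 0 ∧ i' = k (m - 1)) ∨
      (j' = m - 1 ∧ j = 0 ∧ i' = 0 ∧ i = k (m - 1))) ∧
  (∀ v : V, ∃ j i, j < m ∧ i < n ∧ node j i = v)

structure Sys (m : ℕ) (M : Type) where
  C : ZMod m → Set M
  T : ZMod m → Set M
  U : ZMod m → Set M

@[ext] structure St (m : ℕ) (M : Type) where
  s : ZMod m → M
  L : ZMod m → M
  R : ZMod m → M

noncomputable def fire {m : ℕ} {M : Type} (G : Sys m M) (X : St m M) (t : ZMod m) (c : M) : St m M where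
  s := fun x => if x = t then c else X.s x
  L := fun x => if x = t + 1 ∧ c ∈ G.T x then c else X.L x
  R := fun x => if x + 1 = t ∧ c ∈ G.U x then c else X.R x

inductive Reach {m : ℕ} {M : Type} (G : Sys m M) (A : ZMod m → Prop) : ℕ → St m M → St m M → Prop
  | refl (k : ℕ) (X : St m M) : Reach G A k X X
  | step (k : ℕ) (X X' : St m M) (t : ZMod m) (c : M) : A t → c ∈ G.C t → X.s t ≠ X.L t →
      X.s t ≠ X.R t → (c = X.L t ∨ c = X.R t) → Reach G A k (fire G X t c) X' → Reach G A (k+1) X X'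

def good {m : ℕ} {M : Type} (G : Sys m M) (X : St m M) (t : ZMod m) : Prop :=
  X.s t = X.L t ∨ (X.L t ∉ G.C t ∧ (X.s t = X.R t ∨ X.R t ∉ G.C t))

def clean {m : ℕ} {M : Type} (G : Sys m M) (X : St m M) (t : ZMod m) : Prop :=
  X.s t = X.L t ∨ X.s t = X.R t ∨ (X.L t ∉ G.C t ∧ X.R t ∉ G.C t)

def pair {m : ℕ} {M : Type} (X : St m M) (p : ZMod m) : Prop :=
  X.s p = X.s (p+1) ∧ X.R p = X.s p ∧ X.L (p+1) = X.s p

section red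
variable {m : ℕ} {M : Type} {G : Sys m M} {A B : ZMod m → Prop} {X Y Z : St m M} {k l : ℕ}

theorem good.clean {t : ZMod m} (h : good G X t) : clean G X t := by
  unfold good at h; unfold CG.clean; tauto

theorem Reach.mono (h : Reach G A k X Y) (hk : k ≤ l) (hA : ∀ x, A x → B x) : Reach G B l X Y := by
  induction h generalizing l with
  | refl k X => exact Reach.refl _ _
  | step k X X' t c h1 h2 h3 h4 h5 h6 ih =>
    obtain ⟨l', rfl⟩ : ∃ l', l = l' + 1 := ⟨l - 1, by omega⟩
    exact Reach.step _ _ _ t c (hA _ h1) h2 h3 h4 h5 (ih (by omega))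

theorem Reach.trans (h : Reach G A k X Y) (h' : Reach G A l Y Z) : Reach G A (k + l) X Z := by
  induction h with
  | refl k X => exact h'.mono (by omega) (fun _ h => h)
  | step k X X' t c h1 h2 h3 h4 h5 h6 ih =>
    rw [show k + 1 + l = (k + l) + 1 by ring]
    exact Reach.step _ _ _ t c h1 h2 h3 h4 h5 (ih h')

theorem Reach.one {t : ZMod m} {c : M} (h1 : A t) (h2 : c ∈ G.C t) (h3 : X.s t ≠ X.L t)
    (h4 : X.s t ≠ X.R t) (h5 : c = X.L t ∨ c = X.R t) : Reach G A 1 X (fire G X t c) :=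
  Reach.step 0 _ _ t c h1 h2 h3 h4 h5 (Reach.refl _ _)

theorem Reach.s_eq (h : Reach G A k X Y) {x : ZMod m} (hx : ¬ A x) : Y.s x = X.s x := by
  induction h with
  | refl k X => rfl
  | step k X X' t c h1 h2 h3 h4 h5 h6 ih =>
    rw [ih]; simp only [fire]; rw [if_neg]; rintro rfl; exact hx h1

theorem Reach.L_eq (h : Reach G A k X Y) {x : ZMod m} (hx : ¬ A (x - 1)) : Y.L x = X.L x := by
  induction h with
  | refl k X => rfl
  | step k X X' t c h1 h2 h3 h4 h5 h6 ih =>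
    rw [ih]; simp only [fire]; rw [if_neg]; rintro ⟨rfl, -⟩; apply hx; simpa using h1

theorem Reach.R_eq (h : Reach G A k X Y) {x : ZMod m} (hx : ¬ A (x + 1)) : Y.R x = X.R x := by
  induction h with
  | refl k X => rfl
  | step k X X' t c h1 h2 h3 h4 h5 h6 ih =>
    rw [ih]; simp only [fire]; rw [if_neg]; rintro ⟨rfl, -⟩; exact hx h1

theorem Reach.valid (h : Reach G A k X Y) (hv : ∀ t, X.s t ∈ G.C t) : ∀ t, Y.s t ∈ G.C t := by
  induction h with
  | refl k X => exact hv
  | step k X X' t c h1 h2 h3 h4 h5 h6 ih =>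
    apply ih; intro x; simp only [fire]; split_ifs with hx
    · subst hx; exact h2
    · exact hv x

theorem Reach.L_mem (h : Reach G A k X Y) (x : ZMod m) : Y.L x = X.L x ∨ Y.L x ∈ G.C (x - 1) := by
  induction h with
  | refl k X => left; rfl
  | step k X X' t c h1 h2 h3 h4 h5 h6 ih =>
    rcases ih with ih | ih
    · rw [ih]; simp only [fire]; split_ifs with hx
      · right; rw [hx.1]; simpa using h2
      · left; rfl
    · right; exact ih

theorem pair.reach (h : Reach G A k X Y) {p : ZMod m} (hp : pair X p) : pair Y p := by
  induction h with
  | refl k X => exact hp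
  | step k X X' t c h1 h2 h3 h4 h5 h6 ih =>
    apply ih
    obtain ⟨p1, p2, p3⟩ := hp
    have e1 : p ≠ t := by rintro rfl; exact h4 p2.symm
    have e2 : p + 1 ≠ t := by rintro rfl; exact h3 (by rw [p3, p1])
    have e3 : p + 1 ≠ t + 1 := by intro h; exact e1 (add_right_cancel h)
    refine ⟨?_, ?_, ?_⟩ <;> simp [fire, e1, e2, p1, p2, p3]

theorem pos_ne (a : ZMod m) {i j : ℕ} (hi : i < m) (hj : j < m) (h : i ≠ j) :
    a + (i : ZMod m) ≠ a + (j : ZMod m) := by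
  intro e
  have e := add_left_cancel e
  rw [ZMod.natCast_eq_natCast_iff'] at e
  rw [Nat.mod_eq_of_lt hi, Nat.mod_eq_of_lt hj] at e
  exact h e

theorem pos_inj (a : ZMod m) {i j : ℕ} (hi : i < m) (hj : j < m) (h : a + (i : ZMod m) = a + (j : ZMod m)) :
    i = j := by
  by_contra h'; exact pos_ne a hi hj h' h


def P {m : ℕ} (a : ZMod m) (i : ℕ) : ZMod m := a + (i : ZMod m)

def Iv (a : ZMod m) (q : ℕ) (x : ZMod m) : Prop := ∃ i, 1 ≤ i ∧ i ≤ q ∧ x = P a i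

theorem P_inj (a : ZMod m) {i j : ℕ} (hi : i < m) (hj : j < m) (h : P a i = P a j) : i = j := pos_inj a hi hj h

theorem P_zero (a : ZMod m) : P a 0 = a := by simp [P]
theorem P_succ (a : ZMod m) (i : ℕ) : P a i + 1 = P a (i + 1) := by simp [P]; ring
theorem P_m (a : ZMod m) : P a m = a := by simp [P]
theorem P_P (a : ZMod m) (i j : ℕ) : P (P a i) j = P a (i + j) := by simp [P]; ring
theorem P_surj [NeZero m] (a x : ZMod m) : ∃ i, i < m ∧ x = P a i :=
  ⟨(x - a).val, ZMod.val_lt _, by simp [P]⟩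
theorem P_iff (a : ZMod m) {i j : ℕ} (hi : i < m) (hj : j < m) : P a i = P a j ↔ i = j :=
  ⟨P_inj a hi hj, fun h => by rw [h]⟩

theorem fire_s (a : ZMod m) {i j : ℕ} (hi : i < m) (hj : j < m) (c : M) :
    (fire G X (P a j) c).s (P a i) = if i = j then c else X.s (P a i) := by
  simp only [fire, P_iff a hi hj]

theorem fire_L (a : ZMod m) {i j : ℕ} (hi : i < m) (hj : j + 1 < m) (c : M) :
    (fire G X (P a j) c).L (P a i) =
      if i = j + 1 ∧ c ∈ G.T (P a i) then c else X.L (P a i) := by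
  simp only [fire, P_succ, P_iff a hi hj]

theorem fire_R (a : ZMod m) {i j : ℕ} (hi : i < m) (hj : j < m) (hj1 : 1 ≤ j) (c : M) :
    (fire G X (P a j) c).R (P a i) =
      if i + 1 = j ∧ c ∈ G.U (P a i) then c else X.R (P a i) := by
  simp only [fire]
  have : (P a i + 1 = P a j) ↔ i + 1 = j := by
    rw [P_succ]
    rcases Nat.lt_or_ge (i+1) m with h | h
    · exact P_iff a h hj
    · have : i + 1 = m := by omega
      rw [this]
      nth_rewrite 1 [P_m, ← P_zero a]
      rw [P_iff a (by omega) hj]; omega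
  simp only [this]

theorem leftwave (a : ZMod m) (b : M) (f : ℕ) (hf : f < m) : ∀ j, j < f → ∀ X : St m M,
    (∀ t, X.s t ∈ G.C t) → b ∈ G.C (P a f) →
    (∀ i, 1 ≤ i → i ≤ f → i ≠ j → good G X (P a i)) →
    X.s (P a (j + 1)) = b →
    (1 ≤ j → good G X (P a j) ∨ (X.R (P a j) = b ∧
      (X.L (P a j) ∈ G.C (P a j) → X.s (P a j) = X.L (P a j)))) →
    ∃ X', Reach G (Iv a j) j X X' ∧
      (∀ i, 1 ≤ i → i ≤ f → good G X' (P a i)) ∧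
      (X'.R a = X.R a ∨ (X'.R a = b ∧ ∀ i, 1 ≤ i → i ≤ j → X'.s (P a i) = b ∧ X'.R (P a i) = b)) ∧
      ((∃ p, pair X' p) ∨ ∀ i, 1 ≤ i → i ≤ f → X'.L (P a i) = X.L (P a i)) ∧
      (∀ x, X'.s x = X.s x ∨ X'.s x = b) := by
  intro j
  induction j with
  | zero =>
    intro _ X hv hb hg hs _
    exact ⟨X, Reach.refl _ _, fun i h1 h2 => hg i h1 h2 (by omega), Or.inl rfl, Or.inr fun _ _ _ => rfl,
      fun _ => Or.inl rfl⟩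
  | succ j ih =>
    intro hj X hv hb hg hs h0
    by_cases hgj : good G X (P a (j + 1))
    · refine ⟨X, Reach.refl _ _, fun i h1 h2 => ?_, Or.inl rfl, Or.inr fun _ _ _ => rfl,
        fun _ => Or.inl rfl⟩
      by_cases h : i = j + 1
      · subst h; exact hgj
      · exact hg i h1 h2 h
    · obtain ⟨hR, hW⟩ := (h0 (by omega)).resolve_left hgj
      have hgj' := hgj
      unfold good at hgj
      push Not at hgj
      obtain ⟨q1, q2⟩ := hgj
      have q3 : X.L (P a (j + 1)) ∉ G.C (P a (j + 1)) := fun h => q1 (hW h)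
      obtain ⟨q4, q5⟩ := q2 q3
      rw [hR] at q5
      set X1 := fire G X (P a (j + 1)) b with hX1
      have r1 : Reach G (Iv a (j + 1)) 1 X X1 :=
        Reach.one ⟨j + 1, by omega, le_rfl, rfl⟩ q5 q1 q4 (Or.inr hR.symm)
      have es : ∀ i, i < m → X1.s (P a i) = if i = j + 1 then b else X.s (P a i) :=
        fun i hi => fire_s a hi (by omega) b
      have eL : ∀ i, i < m → X1.L (P a i) =
          if i = j + 1 + 1 ∧ b ∈ G.T (P a i) then b else X.L (P a i) :=
        fun i hi => fire_L a hi (by omega) b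
      have eR : ∀ i, i < m → X1.R (P a i) =
          if i + 1 = j + 1 ∧ b ∈ G.U (P a i) then b else X.R (P a i) :=
        fun i hi => fire_R a hi (by omega) (by omega) b
      have hgood : ∀ i, 1 ≤ i → i ≤ f → i ≠ j → good G X1 (P a i) := by
        intro i h1 h2 h3
        unfold good
        rw [es i (by omega), eL i (by omega), eR i (by omega)]
        by_cases hi : i = j + 1
        · subst hi
          right
          rw [if_neg (by omega), if_pos rfl, if_neg (by omega)]
          exact ⟨q3, Or.inl hR.symm⟩
        · have := hg i h1 h2 hi
          unfold good at this
          by_cases hi2 : i = j + 1 + 1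
          · subst hi2
            rw [hs] at this ⊢
            rw [if_neg hi, if_neg (by omega : ¬ (j+1+1+1=j+1 ∧ _))]
            by_cases hT : b ∈ G.T (P a (j+1+1))
            · left; rw [if_pos ⟨rfl, hT⟩]
            · rw [if_neg (fun h => hT h.2)]; exact this
          · rw [if_neg hi, if_neg (fun h => hi2 h.1), if_neg (by omega)]; exact this
      obtain ⟨X', g1, g2, g3, g4, g5⟩ := ih (by omega) X1 (r1.valid hv) hb hgood
        (by rw [es _ (by omega)]; simp) (by
          intro hj1
          have := hg j hj1 (by omega) (by omega)
          unfold good at this ⊢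
          rw [es j (by omega), eL j (by omega), eR j (by omega), if_neg (by omega), if_neg (by omega : ¬ (j = j+1+1 ∧ _))]
          have h4 : X.L (P a j) ∈ G.C (P a j) → X.s (P a j) = X.L (P a j) := by
            tauto
          by_cases hU : b ∈ G.U (P a j)
          · right; exact ⟨if_pos ⟨rfl, hU⟩, h4⟩
          · left; rw [if_neg (fun h => hU h.2)]; exact this)
      have nin : ∀ i, i < m → j < i → ¬ Iv a j (P a i) := by
        rintro i hi hji ⟨i', h1, h2, h3⟩
        have := pos_inj a hi (by omega) h3
        omega
      have f1 : X'.s (P a (j + 1)) = b := by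
        rw [g1.s_eq (nin _ (by omega) (by omega)), es _ (by omega)]; simp
      have f2 : X'.R (P a (j + 1)) = b := by
        rw [g1.R_eq, eR _ (by omega)]
        · simp; simpa using hR
        · have := nin (j + 1 + 1) (by omega) (by omega)
          rw [P_succ] 
          exact this
      have key : Reach G (Iv a (j + 1)) (j + 1) X X' := by
        have := r1.trans (g1.mono le_rfl (B := Iv a (j + 1))
          (by rintro x ⟨i, h1, h2, h3⟩; exact ⟨i, h1, by omega, h3⟩))
        exact this.mono (by omega) (fun _ h => h)
      refine ⟨X', key, g2, ?_, ?_, ?_⟩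
      · have e0 := eR 0 (by omega)
        rw [P_zero] at e0
        have hall : (∀ i, 1 ≤ i → i ≤ j → X'.s (P a i) = b ∧ X'.R (P a i) = b) →
          ∀ i, 1 ≤ i → i ≤ j + 1 → X'.s (P a i) = b ∧ X'.R (P a i) = b := by
          intro h i h1 h2
          by_cases hi : i = j + 1
          · subst hi; exact ⟨f1, f2⟩
          · exact h i h1 (by omega)
        rcases g3 with g3 | ⟨g3, g3'⟩
        · rw [g3, e0]
          split_ifs with hc
          · right
            refine ⟨rfl, hall ?_⟩
            intro i h1 h2; omega
          · left; rfl
        · exact Or.inr ⟨g3, hall g3'⟩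
      · by_cases hT : b ∈ G.T (P a (j + 1 + 1))
        · left
          refine ⟨P a (j + 1), pair.reach g1 ?_⟩
          have ea : P a (j + 1) + 1 = P a (j + 1 + 1) := P_succ _ _
          unfold pair
          rw [ea, es _ (by omega), es _ (by omega), eR _ (by omega), eL _ (by omega), if_pos rfl,
            if_neg (by omega), if_neg (by simp), if_pos ⟨rfl, hT⟩]
          exact ⟨hs.symm, hR, rfl⟩
        · rcases g4 with g4 | g4
          · exact Or.inl g4
          · right
            intro i h1 h2
            rw [g4 i h1 h2, eL i (by omega), if_neg]
            rintro ⟨rfl, h⟩; exact hT h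
      · intro x
        rcases g5 x with h | h
        · rw [h, hX1]; simp only [fire]; split_ifs
          · right; rfl
          · left; rfl
        · right; exact h
end red

section red2
variable {m : ℕ} {M : Type} {G : Sys m M} {A B : ZMod m → Prop} {X Y Z : St m M} {k l : ℕ}

theorem not_Iv (a : ZMod m) {q i : ℕ} (hq : q < m) (h : q < i) (hi : i ≤ m) : ¬ Iv a q (P a i) := by
  rintro ⟨j, h1, h2, h3⟩
  rcases Nat.lt_or_ge i m with h' | h'
  · have := P_inj a h' (by omega) h3; omega
  · have : i = m := by omega
    subst this
    rw [P_m] at h3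
    have := P_inj a (i := 0) (by omega) (by omega) ((P_zero a).trans h3); omega

theorem P_pred (a : ZMod m) {i : ℕ} (h : 1 ≤ i) : P a i - 1 = P a (i - 1) := by
  obtain ⟨j, rfl⟩ : ∃ j, i = j + 1 := ⟨i - 1, by omega⟩
  rw [← P_succ]; simp

theorem Reach.ks {a : ZMod m} {q : ℕ} (h : Reach G (Iv a q) k X Y) (hq : q < m) {i : ℕ} (h1 : q < i)
    (h2 : i ≤ m) : Y.s (P a i) = X.s (P a i) := h.s_eq (not_Iv a hq h1 h2)

theorem Reach.kL {a : ZMod m} {q : ℕ} (h : Reach G (Iv a q) k X Y) (hq : q < m) {i : ℕ} (h1 : q + 1 < i)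
    (h2 : i ≤ m + 1) : Y.L (P a i) = X.L (P a i) := by
  apply h.L_eq
  rw [P_pred _ (by omega)]
  exact not_Iv a hq (by omega) (by omega)

theorem Reach.kR {a : ZMod m} {q : ℕ} (h : Reach G (Iv a q) k X Y) (hq : q < m) {i : ℕ} (h1 : q ≤ i)
    (h2 : i + 1 ≤ m) : Y.R (P a i) = X.R (P a i) := by
  apply h.R_eq
  rw [P_succ]
  exact not_Iv a hq (by omega) (by omega)

theorem Iv.mono {a : ZMod m} {q q' : ℕ} (h : q ≤ q') : ∀ x, Iv a q x → Iv a q' x := by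
  rintro x ⟨i, h1, h2, h3⟩; exact ⟨i, h1, by omega, h3⟩

theorem process (a : ZMod m) (f : ℕ) (h1 : 1 ≤ f) (hf : f < m) (X : St m M) (hv : ∀ t, X.s t ∈ G.C t)
    (hg : ∀ i, 1 ≤ i → i < f → good G X (P a i)) (hd : ¬ clean G X (P a f)) :
    ∃ c X', Reach G (Iv a f) f X X' ∧ c ∈ G.C (P a f) ∧
      ((X.L (P a f) ∈ G.C (P a f) ∧ c = X.L (P a f)) ∨ (X.L (P a f) ∉ G.C (P a f) ∧ c = X.R (P a f))) ∧
      (∀ i, 1 ≤ i → i ≤ f → good G X' (P a i)) ∧ X'.s (P a f) = c ∧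
      (X'.R a = X.R a ∨ (X'.R a = c ∧ ∀ i, 1 ≤ i → i < f → X'.s (P a i) = c ∧ X'.R (P a i) = c)) ∧
      ((∃ p, pair X' p) ∨ ∀ i, 1 ≤ i → i ≤ f → X'.L (P a i) = X.L (P a i)) ∧
      (∀ x, X'.s x = X.s x ∨ X'.s x = c) ∧
      (X'.L (P a (f+1)) = X.L (P a (f+1)) ∨ X'.L (P a (f+1)) = c) := by
  unfold clean at hd
  push Not at hd
  obtain ⟨d1, d2, d3⟩ := hd
  obtain ⟨c, hcC, hcc⟩ : ∃ c, c ∈ G.C (P a f) ∧ ((X.L (P a f) ∈ G.C (P a f) ∧ c = X.L (P a f)) ∨ (X.L (P a f) ∉ G.C (P a f) ∧ c = X.R (P a f))) := by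
    by_cases h : X.L (P a f) ∈ G.C (P a f)
    · exact ⟨_, h, Or.inl ⟨h, rfl⟩⟩
    · exact ⟨_, d3 h, Or.inr ⟨h, rfl⟩⟩
  have r1 : Reach G (Iv a f) 1 X (fire G X (P a f) c) :=
    Reach.one ⟨f, h1, le_rfl, rfl⟩ hcC d1 d2 (by tauto)
  set X1 := fire G X (P a f) c with hX1
  obtain ⟨j, rfl⟩ : ∃ j, f = j + 1 := ⟨f - 1, by omega⟩
  have es : ∀ i, i < m → X1.s (P a i) = if i = j + 1 then c else X.s (P a i) :=
    fun i hi => fire_s a hi (by omega) c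
  have eL : ∀ i, i ≤ j + 1 → 1 ≤ i → X1.L (P a i) = X.L (P a i) := by
    intro i hi hi1
    simp only [hX1, fire]
    rw [if_neg]
    rintro ⟨h, -⟩
    have : P a i = P a (i - 1) + 1 := by rw [P_succ]; congr 1; omega
    rw [this] at h
    have := P_inj a (by omega) (by omega) (add_right_cancel h); omega
  have eR : ∀ i, i < m → X1.R (P a i) = if i + 1 = j + 1 ∧ c ∈ G.U (P a i) then c else X.R (P a i) :=
    fun i hi => fire_R a hi (by omega) (by omega) c
  have hgood : ∀ i, 1 ≤ i → i ≤ j + 1 → i ≠ j → good G X1 (P a i) := by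
    intro i h1 h2 h3
    unfold good
    rw [es i (by omega), eL i (by omega) (by omega), eR i (by omega)]
    by_cases hi : i = j + 1
    · subst hi
      rw [if_pos rfl, if_neg (by omega)]
      tauto
    · have := hg i h1 (by omega)
      rw [if_neg hi, if_neg (by omega)]; exact this
  obtain ⟨X', g1, g2, g3, g4, g5⟩ := leftwave (G := G) a c (j+1) hf j (by omega) X1 (r1.valid hv) hcC hgood
    (by rw [es _ hf, if_pos rfl]) (by
      intro hj1
      have := hg j hj1 (by omega)
      unfold good at this ⊢
      rw [es j (by omega), eL j (by omega) hj1, eR j (by omega), if_neg (by omega)]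
      have h4 : X.L (P a j) ∈ G.C (P a j) → X.s (P a j) = X.L (P a j) := by
        tauto
      by_cases hU : c ∈ G.U (P a j)
      · right; exact ⟨if_pos ⟨rfl, hU⟩, h4⟩
      · left; rw [if_neg (fun h => hU h.2)]; exact this)
  refine ⟨c, X', (r1.trans (g1.mono le_rfl (Iv.mono (by omega)))).mono (by omega) (fun _ h => h), hcC, hcc, g2, ?_, ?_, ?_, ?_, ?_⟩
  · rw [g1.ks (by omega) (by omega) (by omega), es _ hf, if_pos rfl]
  · have e0 := eR 0 (by omega)
    rw [P_zero] at e0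
    rcases g3 with g3 | ⟨g3, g3'⟩
    · rw [g3, e0]
      split_ifs with hc
      · right; exact ⟨rfl, fun i h1 h2 => by omega⟩
      · left; rfl
    · right; exact ⟨g3, fun i h1 h2 => g3' i h1 (by omega)⟩
  · rcases g4 with g4 | g4
    · exact Or.inl g4
    · right; intro i h1 h2; rw [g4 i h1 h2, eL i h2 h1]
  · intro x
    rcases g5 x with h | h
    · rw [h, hX1]; simp only [fire]; split_ifs
      · right; rfl
      · left; rfl
    · right; exact h
  · rw [g1.kL (by omega) (by omega) (by omega), hX1]
    simp only [fire]; split_ifs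
    · right; rfl
    · left; rfl

theorem RR (a : ZMod m) (e : ℕ) (he : e < m) : ∀ d f, 1 ≤ f → f ≤ e + 1 → e + 1 - f = d → ∀ X : St m M,
    (∀ t, X.s t ∈ G.C t) → (∀ i, 1 ≤ i → i < f → good G X (P a i)) →
    (∀ i, f < i → i ≤ e → clean G X (P a i)) →
    ∃ f' X', f ≤ f' ∧ f' ≤ e + 1 ∧ Reach G (Iv a (f' - 1)) (m * d) X X' ∧
      (∀ i, 1 ≤ i → i < f' → good G X' (P a i)) ∧ (∀ i, f' ≤ i → i ≤ e → clean G X' (P a i)) := by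
  intro d
  induction d with
  | zero =>
    intro f h1 h2 h3 X hv hg hc
    exact ⟨f, X, le_rfl, h2, Reach.refl _ _, hg, fun i h h' => by omega⟩
  | succ d ih =>
    intro f h1 h2 h3 X hv hg hc
    by_cases hcl : clean G X (P a f)
    · refine ⟨f, X, le_rfl, h2, Reach.refl _ _, hg, fun i h h' => ?_⟩
      by_cases hi : i = f
      · subst hi; exact hcl
      · exact hc i (by omega) h'
    · obtain ⟨c, X1, r1, -, -, g2, -⟩ := process (G := G) a f h1 (by omega) X hv hg hcl
      obtain ⟨f', X', q1, q2, q3, q4, q5⟩ := ih (f + 1) (by omega) (by omega) (by omega) X1 (r1.valid hv)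
        (fun i h h' => g2 i h (by omega)) (by
          intro i h h'
          have := hc i (by omega) h'
          unfold clean at this ⊢
          rw [r1.ks (by omega) (by omega) (by omega), r1.kL (by omega) (by omega) (by omega), r1.kR (by omega) (by omega) (by omega)]
          exact this)
      refine ⟨f', X', by omega, q2, ((r1.mono le_rfl (Iv.mono (by omega))).trans q3).mono ?_ (fun _ h => h), q4, q5⟩
      rw [mul_add]; omega

theorem N0 (a : ZMod m) (e : ℕ) (he : e < m) : ∀ j, j ≤ e → ∀ X : St m M, (∀ t, X.s t ∈ G.C t) →
    ∃ X', Reach G (Iv a e) (m * m * j) X X' ∧ ∀ i, e - j < i → i ≤ e → clean G X' (P a i) := by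
  intro j
  induction j with
  | zero =>
    intro _ X hv
    exact ⟨X, Reach.refl _ _, fun i h h' => by omega⟩
  | succ j ih =>
    intro hj X hv
    obtain ⟨X1, r1, c1⟩ := ih (by omega) X hv
    obtain ⟨f', X', q1, q2, q3, q4, q5⟩ := RR (G := G) (P a (e - j - 1)) (j + 1) (by omega) _ 1 (by omega) (by omega) rfl X1
      (r1.valid hv) (fun i h h' => by omega) (by
        intro i h h'
        rw [P_P]
        exact c1 _ (by omega) (by omega))
    refine ⟨X', ?_, ?_⟩
    · have : Reach G (Iv a e) (m * m) X1 X' := q3.mono (Nat.mul_le_mul_left m (by omega)) (by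
        rintro x ⟨i, h1, h2, h3⟩
        exact ⟨e - j - 1 + i, by omega, by omega, by rw [h3, P_P]⟩)
      exact (r1.trans this).mono (by rw [mul_add]; omega) (fun _ h => h)
    · intro i h h'
      obtain ⟨i', rfl⟩ : ∃ i', i = (e - j - 1) + i' := ⟨i - (e - j - 1), by omega⟩
      rw [← P_P]
      by_cases hi : i' < f'
      · exact (q4 i' (by omega) hi).clean
      · exact q5 i' (by omega) (by omega)

theorem N1 (hm : 2 ≤ m) {X : St m M} (hv : ∀ t, X.s t ∈ G.C t) {p : ZMod m} (hp : pair X p) :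
    ∃ X', Reach G (fun _ => True) (m * m * m) X X' ∧ ∀ t, clean G X' t := by
  haveI : NeZero m := ⟨by omega⟩
  obtain ⟨X', r, c⟩ := N0 (G := G) (P p 1) (m - 2) (by omega) (m - 2) le_rfl X hv
  refine ⟨X', r.mono (Nat.mul_le_mul_left _ (by omega)) (fun _ _ => trivial), fun t => ?_⟩
  obtain ⟨p1, p2, p3⟩ := pair.reach r hp
  obtain ⟨i, hi, rfl⟩ := P_surj (P p 1) t
  by_cases h0 : i = 0
  · subst h0
    rw [P_zero, ← P_succ, P_zero]; left; rw [← p1, p3]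
  · by_cases h2 : i = m - 1
    · subst h2
      rw [P_P, show 1 + (m - 1) = m by omega, P_m]; right; left; exact p2.symm
    · exact c i (by omega) (by omega)

def Sys.mirror (G : Sys m M) : Sys m M := ⟨fun t => G.C (-t), fun t => G.U (-t), fun t => G.T (-t)⟩
def St.mirror (X : St m M) : St m M := ⟨fun t => X.s (-t), fun t => X.R (-t), fun t => X.L (-t)⟩

theorem mirror_mirror (G : Sys m M) : G.mirror.mirror = G := by simp [Sys.mirror]
theorem St.mirror_mirror (X : St m M) : X.mirror.mirror = X := by simp [St.mirror]

theorem fire_mirror (X : St m M) (t : ZMod m) (c : M) :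
    (fire G X t c).mirror = fire G.mirror X.mirror (-t) c := by
  ext x
  · simp [fire, St.mirror, neg_eq_iff_eq_neg]
  · simp only [fire, St.mirror, Sys.mirror]
    congr 1
    apply propext
    have : (-x + 1 = t) ↔ (x = -t + 1) := by
      constructor <;> intro h <;> [rw [← h]; rw [h]] <;> ring
    rw [this]
  · simp only [fire, St.mirror, Sys.mirror]
    congr 1
    apply propext
    have : (-x = t + 1) ↔ (x + 1 = -t) := by
      constructor
      · intro h; rw [← neg_eq_iff_eq_neg] at *; rw [neg_add, h]; ring
      · intro h; rw [← neg_eq_iff_eq_neg] at *; rw [← h]; ring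
    rw [this]

theorem Reach.mirror (h : Reach G A k X Y) : Reach G.mirror (fun x => A (-x)) k X.mirror Y.mirror := by
  induction h with
  | refl k X => exact Reach.refl _ _
  | step k X X' t c h1 h2 h3 h4 h5 h6 ih =>
    rw [fire_mirror] at ih
    refine Reach.step _ _ _ (-t) c ?_ ?_ ?_ ?_ ?_ ih <;> simp [St.mirror, Sys.mirror, *]
    tauto

theorem Reach.of_mirror (h : Reach G.mirror A k X.mirror Y) : Reach G (fun x => A (-x)) k X Y.mirror := by
  have := h.mirror
  rwa [CG.mirror_mirror, St.mirror_mirror] at this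

theorem clean_mirror (t : ZMod m) : clean G.mirror X.mirror t ↔ clean G X (-t) := by
  unfold clean; simp only [Sys.mirror, St.mirror]; tauto

end red2

section red3
variable {m : ℕ} {M : Type} {G : Sys m M} {A B : ZMod m → Prop} {X Y Z : St m M} {k l : ℕ}

def TT {m : ℕ} : ZMod m → Prop := fun _ => True

def allbut (G : Sys m M) (X : St m M) (f : ZMod m) : Prop := ∀ t, t ≠ f → good G X t

theorem allbut.clean {f : ZMod m} (h : allbut G X f) (hf : clean G X f) : ∀ t, clean G X t := by
  intro t
  by_cases ht : t = f
  · rw [ht]; exact hf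
  · exact (h t ht).clean

theorem add_one_ne (hm : 2 ≤ m) (f : ZMod m) : f + 1 ≠ f := by
  intro h
  have h2 : P f 1 = P f 0 := by rw [← P_succ, P_zero]; exact h
  have := P_inj f (by omega) (by omega) h2
  omega

theorem GS (hm : 2 ≤ m) (f : ZMod m) (X : St m M) (hv : ∀ t, X.s t ∈ G.C t)
    (hg : allbut G X f) (hd : ¬ clean G X f) :
    ∃ c X', Reach G TT m X X' ∧ c ∈ G.C f ∧
      ((X.L f ∈ G.C f ∧ c = X.L f) ∨ (X.L f ∉ G.C f ∧ c = X.R f)) ∧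
      allbut G X' (f + 1) ∧ X'.s f = c ∧
      (X'.R (f+1) = X.R (f+1) ∨ (X'.R (f+1) = c ∧ ∀ t, t ≠ f → t ≠ f + 1 → X'.s t = c ∧ X'.R t = c)) ∧
      ((∃ p, pair X' p) ∨ ∀ t, t ≠ f + 1 → X'.L t = X.L t) ∧
      (∀ x, X'.s x = X.s x ∨ X'.s x = c) ∧
      (X'.L (f+1) = X.L (f+1) ∨ X'.L (f+1) = c) ∧ X'.R f = X.R f ∧ X'.s (f+1) = X.s (f+1) := by
  have : NeZero m := ⟨by omega⟩
  have hP : P (f + 1) (m - 1) = f := by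
    rw [show f + 1 = P f 1 by rw [← P_succ, P_zero], P_P, show 1 + (m - 1) = m by omega, P_m]
  have hP0 : ∀ t, t ≠ f + 1 → ∃ i, 1 ≤ i ∧ i ≤ m - 1 ∧ t = P (f + 1) i := by
    intro t ht
    obtain ⟨i, hi, rfl⟩ := P_surj (f + 1) t
    refine ⟨i, ?_, by omega, rfl⟩
    by_contra h
    have : i = 0 := by omega
    subst this; rw [P_zero] at ht; exact ht rfl
  obtain ⟨c, X', r, h1, h2, h3, h4, h5, h6, h7, h8⟩ := process (G := G) (f + 1) (m - 1) (by omega) (by omega) X hv (by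
    intro i h1 h2
    apply hg
    intro h
    rw [← hP] at h
    have := P_inj (P f 1) (i := i) (j := m - 1) (by omega) (by omega) (by
      rw [show P f 1 = f + 1 by rw [← P_succ, P_zero]]
      rw [hP] at h ⊢; exact h)
    omega) (by rw [hP]; exact hd)
  rw [show m - 1 + 1 = m by omega, P_m] at h8
  have k1 := r.kR (by omega) (i := m - 1) le_rfl (by omega)
  have k2 := r.ks (by omega) (i := m) (by omega) (by omega)
  rw [P_m] at k2
  rw [hP] at h1 h2 h4 k1
  refine ⟨c, X', r.mono (by omega) (fun _ _ => trivial), h1, h2, ?_, h4, ?_, ?_, h7, h8, k1, k2⟩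
  · intro t ht
    obtain ⟨i, i1, i2, rfl⟩ := hP0 t ht
    exact h3 i i1 i2
  · rcases h5 with h5 | ⟨h5, h5'⟩
    · exact Or.inl h5
    · right
      refine ⟨h5, fun t t1 t2 => ?_⟩
      obtain ⟨i, i1, i2, rfl⟩ := hP0 t t2
      refine h5' i i1 (lt_of_le_of_ne i2 ?_)
      rintro rfl; exact t1 hP
  · rcases h6 with h6 | h6
    · exact Or.inl h6
    · right
      intro t ht
      obtain ⟨i, i1, i2, rfl⟩ := hP0 t ht
      exact h6 i i1 i2

noncomputable def Lam [NeZero m] (G : Sys m M) (X : St m M) (f : ZMod m) : ℕ :=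
  (Finset.univ.filter (fun t => t ≠ f ∧ X.L t ∈ G.C t)).card

def FPc (G : Sys m M) (X : St m M) (f : ZMod m) : Prop :=
  allbut G X f ∧ X.s (f - 1) = X.R (f - 1) ∧ (X.L f ∈ G.C f → X.s f = X.L f ∨ X.L f = X.s (f - 1))

/-- follow condition of the next node -/
theorem next_cond {f : ZMod m} (hm : 2 ≤ m) {c : M} {X' : St m M} (hg : allbut G X f)
    (h8 : X'.L (f+1) = X.L (f+1) ∨ X'.L (f+1) = c) (k2 : X'.s (f+1) = X.s (f+1)) :
    X'.L (f+1) ∈ G.C (f+1) → X'.s (f+1) = X'.L (f+1) ∨ X'.L (f+1) = c := by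
  intro h
  rcases h8 with h8 | h8
  · left
    have := hg (f+1) (add_one_ne hm f)
    unfold good at this
    rw [k2, h8]; rw [h8] at h; tauto
  · exact Or.inr h8

theorem flip (hm : 2 ≤ m) [NeZero m] (f : ZMod m) (X : St m M) (hv : ∀ t, X.s t ∈ G.C t)
    (hg : allbut G X f) (hd : ¬ clean G X f) (hL : X.L f ∉ G.C f) :
    (∃ X', Reach G TT (m + (m * m * m)) X X' ∧ ∀ t, clean G X' t) ∨
    ∃ X', Reach G TT m X X' ∧ FPc G X' (f + 1) ∧
      ((¬ clean G X' (f+1) ∧ X'.L (f+1) ∉ G.C (f+1)) → Lam G X' (f+1) < Lam G X f) := by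
  obtain ⟨c, X', r, h1, h2, h3, h4, h5, h6, h7, h8, k1, k2⟩ := GS (G := G) hm f X hv hg hd
  have hc : c = X.R f := by tauto
  have ne := add_one_ne hm f
  have nc := next_cond hm hg h8 k2
  rcases h6 with ⟨p, hp⟩ | h6
  · left
    obtain ⟨X2, r2, c2⟩ := N1 (G := G) hm (r.valid hv) hp
    exact ⟨X2, r.trans r2, c2⟩
  rcases h5 with h5 | ⟨h5, h5'⟩
  · right
    refine ⟨X', r, ⟨h3, ?_, ?_⟩, ?_⟩
    · simp only [add_sub_cancel_right]; rw [h4, k1, hc]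
    · simp only [add_sub_cancel_right]; rw [h4]; exact nc
    · rintro ⟨d1, d2⟩
      apply Finset.card_lt_card
      rw [Finset.ssubset_iff_of_subset]
      · refine ⟨f + 1, ?_, ?_⟩
        · simp only [Finset.mem_filter, Finset.mem_univ, true_and]
          refine ⟨ne, ?_⟩
          by_contra h
          have := hg (f+1) ne
          unfold good at this
          unfold clean at d1
          rw [k2, h5] at d1
          rcases this with h' | h'
          · rw [← h'] at h; exact h (hv _)
          · tauto
        · simp
      · intro t
        simp only [Finset.mem_filter, Finset.mem_univ, true_and]
        rintro ⟨t1, t2⟩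
        rw [h6 t t1] at t2
        refine ⟨?_, t2⟩
        rintro rfl; exact hL t2
  · left
    have hall : ∀ t, t ≠ f + 1 → X'.s t = c ∧ X'.R t = c := by
      intro t ht
      by_cases htf : t = f
      · subst htf; exact ⟨h4, by rw [k1, hc]⟩
      · exact h5' t htf ht
    by_cases hcl : clean G X' (f + 1)
    · exact ⟨X', r.mono (by omega) (fun _ h => h), h3.clean hcl⟩
    · unfold clean at hcl
      push Not at hcl
      obtain ⟨d1, d2, d3⟩ := hcl
      have hcc : c ∈ G.C (f+1) ∧ (c = X'.L (f+1) ∨ c = X'.R (f+1)) := by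
        by_cases h : X'.L (f+1) ∈ G.C (f+1)
        · have := (nc h).resolve_left d1
          rw [this] at h
          exact ⟨h, Or.inl this.symm⟩
        · have := d3 h
          rw [h5] at this
          exact ⟨this, Or.inr h5.symm⟩
      refine ⟨fire G X' (f+1) c, (r.trans (Reach.one trivial hcc.1 d1 d2 hcc.2)).mono ?_ (fun _ h => h), ?_⟩
      · have : 1 ≤ m * m * m := by
          have : 0 < m * m * m := by positivity
          omega
        omega
      · intro t
        unfold clean
        by_cases ht : t = f + 1
        · subst ht
          rcases hcc.2 with h | h
          · left; simp [fire, ← h]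
          · right; left; simp [fire, ← h]
        · right; left
          simp only [fire]
          rw [if_neg ht, (hall t ht).1, (hall t ht).2]; simp

theorem FP (hm : 2 ≤ m) [NeZero m] : ∀ (N : ℕ) (f : ZMod m) (X : St m M), (∀ t, X.s t ∈ G.C t) →
    FPc G X f → ((¬ clean G X f ∧ X.L f ∉ G.C f) → Lam G X f < N) →
    ∃ X', Reach G TT (N * m + (m + m * m * m)) X X' ∧ ∀ t, clean G X' t := by
  intro N
  induction N with
  | zero =>
    rintro f X hv ⟨h1, h2, h3⟩ h4
    by_cases hcl : clean G X f
    · exact ⟨X, Reach.refl _ _, h1.clean hcl⟩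
    have hL : X.L f ∈ G.C f := by
      by_contra h; have := h4 ⟨hcl, h⟩; omega
    unfold clean at hcl
    push Not at hcl
    obtain ⟨d1, d2, d3⟩ := hcl
    have e := (h3 hL).resolve_left d1
    have r : Reach G TT 1 X (fire G X f (X.L f)) := Reach.one trivial hL d1 d2 (Or.inl rfl)
    have ne : f - 1 ≠ f := by
      intro h; apply add_one_ne hm (f-1); simpa using h.symm
    obtain ⟨X', r', c'⟩ := N1 (G := G) hm (r.valid hv) (p := f - 1) (by
      unfold pair
      simp only [fire, sub_add_cancel]
      rw [if_neg ne, if_pos trivial, e, ← h2]; simp)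
    exact ⟨X', (r.trans r').mono (by omega) (fun _ h => h), c'⟩
  | succ N ih =>
    rintro f X hv hF h4
    by_cases hh : ¬ clean G X f ∧ X.L f ∉ G.C f
    · rcases flip (G := G) hm f X hv hF.1 hh.1 hh.2 with ⟨X', r, c⟩ | ⟨X', r, h5, h6⟩
      · exact ⟨X', r.mono (by omega) (fun _ h => h), c⟩
      · obtain ⟨X2, r2, c2⟩ := ih (f+1) X' (r.valid hv) h5 (by
          intro h; have := h4 hh; have := h6 h; omega)
        exact ⟨X2, (r.trans r2).mono (by rw [add_mul]; omega) (fun _ h => h), c2⟩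
    · obtain ⟨X2, r2, c2⟩ := ih f X hv hF (fun h => absurd h hh)
      exact ⟨X2, r2.mono (by rw [add_mul]; omega) (fun _ h => h), c2⟩

theorem flip_end (hm : 2 ≤ m) [NeZero m] (f : ZMod m) (X : St m M) (hv : ∀ t, X.s t ∈ G.C t)
    (hg : allbut G X f) (hd : ¬ clean G X f) (hL : X.L f ∉ G.C f) :
    ∃ X', Reach G TT (4 * (m * m * m)) X X' ∧ ∀ t, clean G X' t := by
  have b1 : m * 4 ≤ m * m * m := by nlinarith
  have b2 : m * m * 2 ≤ m * m * m := Nat.mul_le_mul_left _ hm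
  rcases flip (G := G) hm f X hv hg hd hL with ⟨X', r, c⟩ | ⟨X', r, h5, h6⟩
  · exact ⟨X', r.mono (by omega) (fun _ h => h), c⟩
  · obtain ⟨X2, r2, c2⟩ := FP (G := G) hm (m + 1) (f+1) X' (r.valid hv) h5 (by
      intro _
      have : Lam G X' (f+1) ≤ Finset.card (Finset.univ : Finset (ZMod m)) := Finset.card_le_card (Finset.filter_subset _ _)
      rw [Finset.card_univ, ZMod.card] at this
      omega)
    exact ⟨X2, (r.trans r2).mono (by rw [add_mul]; omega) (fun _ h => h), c2⟩

theorem FW (hm : 2 ≤ m) [NeZero m] (x : M) : ∀ (N : ℕ) (f : ZMod m) (X : St m M), (∀ t, X.s t ∈ G.C t) →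
    allbut G X f → (X.L f ∈ G.C f → X.s f = X.L f ∨ X.L f = x) →
    (Finset.univ.filter (fun t => X.s t ≠ x)).card ≤ N →
    ∃ X', Reach G TT (N * m + 4 * (m * m * m)) X X' ∧ ∀ t, clean G X' t := by
  intro N
  induction N with
  | zero =>
    intro f X hv hg hL hN
    by_cases hcl : clean G X f
    · exact ⟨X, Reach.refl _ _, hg.clean hcl⟩
    by_cases h : X.L f ∈ G.C f
    · exfalso
      have h1 := hL h
      rw [Nat.le_zero, Finset.card_eq_zero, Finset.filter_eq_empty_iff] at hN
      have := hN (Finset.mem_univ f)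
      apply hcl; left
      push Not at this
      rcases h1 with h1 | h1
      · exact h1
      · rw [this, h1]
    · obtain ⟨X', r, c⟩ := flip_end (G := G) hm f X hv hg hcl h
      exact ⟨X', r.mono (by omega) (fun _ h => h), c⟩
  | succ N ih =>
    intro f X hv hg hL hN
    by_cases hcl : clean G X f
    · exact ⟨X, Reach.refl _ _, hg.clean hcl⟩
    by_cases h : X.L f ∈ G.C f
    · obtain ⟨c, X', r, h1, h2, h3, h4, h5, h6, h7, h8, k1, k2⟩ := GS (G := G) hm f X hv hg hcl
      have sne : X.s f ≠ X.L f := fun h => hcl (Or.inl h)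
      have hLx : X.L f = x := (hL h).resolve_left sne
      have hc : c = x := by rw [← hLx]; tauto
      subst hc
      obtain ⟨X2, r2, c2⟩ := ih (f+1) X' (r.valid hv) h3 (next_cond hm hg h8 k2) (by
        have : (Finset.univ.filter (fun t => X'.s t ≠ c)).card < (Finset.univ.filter (fun t => X.s t ≠ c)).card := by
          apply Finset.card_lt_card
          rw [Finset.ssubset_iff_of_subset]
          · exact ⟨f, by simp; rw [← hLx]; exact sne, by simp [h4]⟩
          · intro t
            simp only [Finset.mem_filter, Finset.mem_univ, true_and]
            intro ht
            rcases h7 t with h | h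
            · rwa [← h]
            · exact absurd h ht
        omega)
      exact ⟨X2, (r.trans r2).mono (by rw [add_mul]; omega) (fun _ h => h), c2⟩
    · obtain ⟨X', r, c⟩ := flip_end (G := G) hm f X hv hg hcl h
      exact ⟨X', r.mono (by omega) (fun _ h => h), c⟩

theorem Endgame (hm : 2 ≤ m) (f : ZMod m) (X : St m M) (hv : ∀ t, X.s t ∈ G.C t)
    (hg : allbut G X f) : ∃ X', Reach G TT (6 * (m * m * m)) X X' ∧ ∀ t, clean G X' t := by
  have : NeZero m := ⟨by omega⟩
  have b1 : m * 4 ≤ m * m * m := by nlinarith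
  have b2 : m * m * 2 ≤ m * m * m := Nat.mul_le_mul_left _ hm
  by_cases hcl : clean G X f
  · exact ⟨X, Reach.refl _ _, hg.clean hcl⟩
  by_cases h : X.L f ∈ G.C f
  · obtain ⟨c, X', r, h1, h2, h3, h4, h5, h6, h7, h8, k1, k2⟩ := GS (G := G) hm f X hv hg hcl
    obtain ⟨X2, r2, c2⟩ := FW (G := G) hm c m (f+1) X' (r.valid hv) h3 (next_cond hm hg h8 k2) (by
      have := Finset.card_le_card (Finset.filter_subset (fun t => X'.s t ≠ c) Finset.univ)
      rwa [Finset.card_univ, ZMod.card] at this)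
    exact ⟨X2, (r.trans r2).mono (by omega) (fun _ h => h), c2⟩
  · obtain ⟨X', r, c⟩ := flip_end (G := G) hm f X hv hg hcl h
    exact ⟨X', r.mono (by omega) (fun _ h => h), c⟩

end red3

section red4
variable {m : ℕ} {M : Type} {G : Sys m M} {A B : ZMod m → Prop} {X Y Z : St m M} {k l : ℕ}

def good' (G : Sys m M) (X : St m M) (t : ZMod m) : Prop :=
  X.s t = X.R t ∨ (X.R t ∉ G.C t ∧ (X.s t = X.L t ∨ X.L t ∉ G.C t))

theorem good'.clean {t : ZMod m} (h : good' G X t) : clean G X t := by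
  unfold good' at h; unfold CG.clean; tauto

theorem neg_P (a : ZMod m) {i : ℕ} (h : i ≤ m) : -(P (-a) i) = P a (m - i) := by
  unfold P
  rw [Nat.cast_sub h]; simp; ring

theorem P_neg (a : ZMod m) {i : ℕ} (h : i ≤ m) : P (-a) i = -(P a (m - i)) := by
  rw [← neg_P a h, neg_neg]

theorem LL (a : ZMod m) (e : ℕ) (he : e < m) (X : St m M)
    (hv : ∀ t, X.s t ∈ G.C t)
    (hc : ∀ i, m - e ≤ i → i < m - 1 → clean G X (P a i)) :
    ∃ g X', m - 1 - e ≤ g ∧ g ≤ m - 1 ∧ Reach G (fun x => ∃ i, g < i ∧ i < m ∧ x = P a i) (m * e) X X' ∧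
      (∀ i, g < i → i < m → good' G X' (P a i)) ∧ (∀ i, m - e ≤ i → i ≤ g → clean G X' (P a i)) := by
  obtain ⟨f', X', q1, q2, q3, q4, q5⟩ := RR (G := G.mirror) (-a) e he _ 1 le_rfl (by omega) rfl X.mirror
    (fun t => hv (-t)) (fun i h1 h2 => by omega) (by
      intro i h1 h2
      rw [clean_mirror, neg_P a (by omega)]
      exact hc _ (by omega) (by omega))
  have hX : X' = X'.mirror.mirror := (St.mirror_mirror X').symm
  refine ⟨m - f', X'.mirror, by omega, by omega, q3.of_mirror.mono (by rw [Nat.add_sub_cancel]) ?_, ?_, ?_⟩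
  · rintro x ⟨i, h1, h2, h3⟩
    refine ⟨m - i, by omega, by omega, ?_⟩
    rw [← neg_P a (by omega), ← h3, neg_neg]
  · intro i h1 h2
    have := q4 (m - i) (by omega) (by omega)
    rw [P_neg a (by omega), show m - (m - i) = i by omega] at this
    unfold good at this
    simp only [Sys.mirror, neg_neg] at this
    exact this
  · intro i h1 h2
    have := q5 (m - i) (by omega) (by omega)
    rw [P_neg a (by omega), show m - (m - i) = i by omega] at this
    rw [hX, clean_mirror, neg_neg] at this
    exact this

theorem Endgame' (hm : 2 ≤ m) (f : ZMod m) (X : St m M) (hv : ∀ t, X.s t ∈ G.C t)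
    (hg : ∀ t, t ≠ f → good' G X t) : ∃ X', Reach G TT (6 * (m * m * m)) X X' ∧ ∀ t, clean G X' t := by
  obtain ⟨X', r, c⟩ := Endgame (G := G.mirror) hm (-f) X.mirror (fun t => hv (-t)) (by
    intro t ht
    exact hg (-t) (by intro h; apply ht; rw [← h, neg_neg]))
  refine ⟨X'.mirror, r.of_mirror, fun t => ?_⟩
  have := c (-t)
  rw [← St.mirror_mirror X', clean_mirror, neg_neg] at this
  exact this

theorem Reach.tt (h : Reach G A k X Y) (hk : k ≤ l) : Reach G TT l X Y := h.mono hk (fun _ _ => trivial)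

theorem P_surj' [NeZero m] (a x : ZMod m) (h : x ≠ a) : ∃ i, 1 ≤ i ∧ i < m ∧ x = P a i := by
  obtain ⟨i, hi, rfl⟩ := P_surj a x
  refine ⟨i, ?_, hi, rfl⟩
  by_contra h'
  have : i = 0 := by omega
  subst this; rw [P_zero] at h; exact h rfl

theorem Round (hm : 2 ≤ m) (o : ZMod m) (X : St m M) (hv : ∀ t, X.s t ∈ G.C t)
    (hc : ∀ t, t ≠ o → clean G X t) :
    (∃ X', Reach G TT (8 * (m * m * m)) X X' ∧ ∀ t, clean G X' t) ∨
    (∃ X', Reach G TT (2 * (m * m * m)) X X' ∧ (∀ t, t ≠ o → clean G X' t) ∧ ¬ clean G X' o ∧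
      X'.L o ∈ G.C (o - 1) ∧ (X.L o ∉ G.C o → X'.L o ∈ G.C o)) := by
  have : NeZero m := ⟨by omega⟩
  have b1 : m * 4 ≤ m * m * m := by nlinarith
  have b2 : m * m * 2 ≤ m * m * m := Nat.mul_le_mul_left _ hm
  have b3 : m * (m - 1) ≤ m * m := Nat.mul_le_mul_left _ (by omega)
  have ho : P (o - 1) 1 = o := by rw [← P_succ, P_zero]; simp
  obtain ⟨f1, X1, q1, q2, q3, q4, q5⟩ := RR (G := G) (o - 1) (m - 1) (by omega) _ 1 le_rfl (by omega) rfl X hv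
    (fun i h1 h2 => by omega) (by
      intro i h1 h2
      apply hc
      intro h
      rw [← ho] at h
      have hh : P (o - 1) i = P (o - 1) 1 := by rw [ho] at h; rw [ho]; exact h
      have := P_inj _ (by omega) (by omega) hh
      omega)
  have hcl : ∀ t, t ≠ o - 1 → clean G X1 t := by
    intro t ht
    obtain ⟨i, i1, i2, rfl⟩ := P_surj' _ _ ht
    rcases Nat.lt_or_ge i f1 with h | h
    · exact (q4 i i1 h).clean
    · exact q5 i h (by omega)
  by_cases hf : f1 = m
  · left
    obtain ⟨X2, r2, c2⟩ := Endgame (G := G) hm (o - 1) X1 (q3.valid hv) (by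
      intro t ht
      obtain ⟨i, i1, i2, rfl⟩ := P_surj' _ _ ht
      exact q4 i i1 (by omega))
    exact ⟨X2, ((q3.tt le_rfl).trans r2).tt (by rw [show m - 1 + 1 - 1 = m - 1 by omega]; omega), c2⟩
  have eL : X1.L o = X.L o := by
    apply q3.L_eq
    have := not_Iv (o - 1) (q := f1 - 1) (i := m) (by omega) (by omega) le_rfl
    rwa [P_m] at this
  have hone : o ≠ o - 1 := by
    intro h; apply add_one_ne hm (o-1); simpa using h
  have hclo := hcl o hone
  obtain ⟨g, X2, g1, g2, g3, g4, g5⟩ := LL (G := G) o (m - 1) (by omega) X1 (q3.valid hv) (by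
    intro i h1 h2
    apply hcl
    have : o - 1 = P o (m - 1) := by
      rw [← P_pred o (by omega), P_m]
    rw [this]
    intro h
    have := P_inj o (by omega) (by omega) h
    omega)
  have rt : Reach G TT (2 * (m * m)) X X2 :=
    ((q3.tt le_rfl).trans (g3.tt le_rfl)).tt (by rw [show m - 1 + 1 - 1 = m - 1 by omega]; omega)
  by_cases hg : g = 0
  · left
    obtain ⟨X3, r3, c3⟩ := Endgame' (G := G) hm o X2 (rt.valid hv) (by
      intro t ht
      obtain ⟨i, i1, i2, rfl⟩ := P_surj' _ _ ht
      exact g4 i (by omega) i2)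
    exact ⟨X3, (rt.trans r3).tt (by omega), c3⟩
  have hall : ∀ t, t ≠ o → clean G X2 t := by
    intro t ht
    obtain ⟨i, i1, i2, rfl⟩ := P_surj' _ _ ht
    rcases Nat.lt_or_ge g i with h | h
    · exact (g4 i h i2).clean
    · exact g5 i (by omega) h
  by_cases hco : clean G X2 o
  · left
    refine ⟨X2, rt.tt (by omega), fun t => ?_⟩
    by_cases ht : t = o
    · rw [ht]; exact hco
    · exact hall t ht
  right
  have es : X2.s o = X1.s o := by
    apply g3.s_eq
    rintro ⟨i, h1, h2, h3⟩
    have := P_inj o (i := 0) (by omega) h2 (by rw [P_zero]; exact h3)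
    omega
  have eR : X2.R o = X1.R o := by
    apply g3.R_eq
    rintro ⟨i, h1, h2, h3⟩
    have := P_inj o (i := 1) (by omega) h2 (by rw [← P_succ, P_zero]; exact h3)
    omega
  have hvo := rt.valid hv o
  unfold clean at hco hclo
  rw [es, eR] at hco
  rw [es] at hvo
  refine ⟨X2, rt.tt (by omega), hall, ?_, ?_, ?_⟩
  · unfold clean; rw [es, eR]; exact hco
  · rcases g3.L_mem o with h | h
    · rw [h] at hco; exact absurd hclo hco
    · exact h
  · intro h
    rw [← eL] at h
    have : X1.s o ≠ X1.L o := by intro h'; rw [← h'] at h; exact h hvo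
    tauto

theorem CaseI (hm : 2 ≤ m) (o : ZMod m) (X : St m M) (hv : ∀ t, X.s t ∈ G.C t)
    (hc : ∀ t, t ≠ o → clean G X t) (hd : ¬ clean G X o) (h1 : X.L o ∈ G.C o) (h2 : X.L o ∈ G.C (o - 1)) :
    ∃ X', Reach G TT (8 * (m * m * m)) X X' ∧ ∀ t, clean G X' t := by
  have : NeZero m := ⟨by omega⟩
  have b1 : m * 4 ≤ m * m * m := by nlinarith
  have b2 : m * m * 2 ≤ m * m * m := Nat.mul_le_mul_left _ hm
  have b3 : m * (m - 2) ≤ m * m := Nat.mul_le_mul_left _ (by omega)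
  set e := X.L o with he
  have hd' := hd
  unfold clean at hd'
  push Not at hd'
  obtain ⟨d1, d2, -⟩ := hd'
  have r1 : Reach G TT 1 X (fire G X o e) := Reach.one trivial h1 d1 d2 (Or.inl rfl)
  set X3 := fire G X o e with hX3
  have hz : P o (m - 1) = o - 1 := by rw [← P_pred o (by omega), P_m]
  have hone : o - 1 ≠ o := by
    intro h; apply add_one_ne hm (o-1); simpa using h.symm
  obtain ⟨f1, X4, q1, q2, q3, q4, q5⟩ := RR (G := G) o (m - 2) (by omega) _ 1 le_rfl (by omega) rfl X3 (r1.valid hv)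
    (fun i h1 h2 => by omega) (by
      intro i h1 h2
      have ne : P o i ≠ P o 0 := fun h => by
        have := P_inj o (by omega) (by omega) h; omega
      rw [P_zero] at ne
      have := hc _ ne
      unfold clean at this ⊢
      have e1 : X3.s (P o i) = X.s (P o i) := by simp [hX3, fire, ne]
      have e2 : X3.L (P o i) = X.L (P o i) := by
        simp only [hX3, fire]; rw [if_neg]; rintro ⟨h, -⟩
        rw [show o + 1 = P o 1 by rw [← P_succ, P_zero]] at h
        have := P_inj o (by omega) (by omega) h; omega
      have e3 : X3.R (P o i) = X.R (P o i) := by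
        simp only [hX3, fire]; rw [if_neg]; rintro ⟨h, -⟩
        rw [P_succ] at h
        have := P_inj o (i := i + 1) (j := 0) (by omega) (by omega) (by rw [P_zero]; exact h); omega
      rw [e1, e2, e3]; exact this)
  have rt : Reach G TT (1 + m * m) X X4 := (r1.trans (q3.tt le_rfl)).tt (by
    rw [show m - 2 + 1 - 1 = m - 2 by omega]; omega)
  have so : X4.s o = e := by
    have := q3.ks (by omega) (i := m) (by omega) le_rfl
    rw [P_m] at this; rw [this]; simp [hX3, fire]
  have Lo : X4.L o = e := by
    have := q3.kL (by omega) (i := m) (by omega) (by omega)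
    rw [P_m] at this; rw [this]; simp [hX3, fire, he]
  by_cases hf : f1 = m - 1
  · obtain ⟨X5, r5, c5⟩ := Endgame (G := G) hm (o - 1) X4 (rt.valid hv) (by
      intro t ht
      by_cases hto : t = o
      · subst hto; left; rw [so, Lo]
      · obtain ⟨i, i1, i2, rfl⟩ := P_surj' _ _ hto
        apply q4 i i1
        rw [← hz] at ht
        have : i ≠ m - 1 := by rintro rfl; exact ht rfl
        omega)
    exact ⟨X5, (rt.trans r5).tt (by omega), c5⟩
  have hall : ∀ t, t ≠ o - 1 → clean G X4 t := by
    intro t ht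
    by_cases hto : t = o
    · subst hto; left; rw [so, Lo]
    · obtain ⟨i, i1, i2, rfl⟩ := P_surj' _ _ hto
      rw [← hz] at ht
      have : i ≠ m - 1 := by rintro rfl; exact ht rfl
      rcases Nat.lt_or_ge i f1 with h | h
      · exact (q4 i i1 h).clean
      · exact q5 i h (by omega)
  by_cases hcz : clean G X4 (o - 1)
  · refine ⟨X4, rt.tt (by omega), fun t => ?_⟩
    by_cases ht : t = o - 1
    · rw [ht]; exact hcz
    · exact hall t ht
  have s4 : X4.s (o - 1) = X.s (o - 1) := by
    rw [← hz, q3.ks (by omega) (i := m - 1) (by omega) (by omega), hz]; simp [hX3, fire, hone]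
  have L4 : X4.L (o - 1) = X.L (o - 1) := by
    rw [← hz, q3.kL (by omega) (i := m - 1) (by omega) (by omega)]
    simp only [hX3, fire]; rw [if_neg]; rintro ⟨h, -⟩
    rw [show o + 1 = P o 1 by rw [← P_succ, P_zero]] at h
    have := P_inj o (by omega) (by omega) h; omega
  have R4 : X4.R (o - 1) = X.R (o - 1) ∨ X4.R (o - 1) = e := by
    rw [← hz, q3.kR (by omega) (i := m - 1) (by omega) (by omega)]
    simp only [hX3, fire]; split_ifs
    · right; rfl
    · left; rfl
  have hcz' := hcz
  have hz0 := hc _ hone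
  unfold clean at hcz' hz0
  have R4' : X4.R (o - 1) = e := by
    rcases R4 with h | h
    · rw [s4, L4, h] at hcz'; exact absurd hz0 hcz'
    · exact h
  push Not at hcz'
  have r5 : Reach G TT 1 X4 (fire G X4 (o - 1) e) := Reach.one trivial h2 hcz'.1 hcz'.2.1 (Or.inr R4'.symm)
  obtain ⟨X6, r6, c6⟩ := N1 (G := G) hm ((rt.trans r5).valid hv) (p := o - 1) (by
    unfold pair
    simp only [fire, sub_add_cancel]
    rw [if_pos trivial, if_neg hone.symm, so, R4', Lo]; simp)
  exact ⟨X6, ((rt.trans r5).trans r6).tt (by omega), c6⟩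

theorem RN (hm : 2 ≤ m) (X : St m M) (hv : ∀ t, X.s t ∈ G.C t) :
    ∃ X', Reach G TT (20 * (m * m * m)) X X' ∧ ∀ t, clean G X' t := by
  have : NeZero m := ⟨by omega⟩
  obtain ⟨X1, r1, c1⟩ := N0 (G := G) 0 (m - 1) (by omega) (m - 1) le_rfl X hv
  replace r1 : Reach G TT (m * m * m) X X1 := r1.tt (Nat.mul_le_mul_left _ (by omega))
  have hc1 : ∀ t, t ≠ (0 : ZMod m) → clean G X1 t := by
    intro t ht
    obtain ⟨i, i1, i2, rfl⟩ := P_surj' _ _ ht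
    exact c1 i (by omega) (by omega)
  rcases Round (G := G) hm 0 X1 (r1.valid hv) hc1 with ⟨X2, r2, c2⟩ | ⟨X2, r2, c2, d2, l2, -⟩
  · exact ⟨X2, (r1.trans r2).tt (by omega), c2⟩
  have r12 := r1.trans r2
  by_cases h : X2.L 0 ∈ G.C 0
  · obtain ⟨X3, r3, c3⟩ := CaseI (G := G) hm 0 X2 (r12.valid hv) c2 d2 h l2
    exact ⟨X3, (r12.trans r3).tt (by omega), c3⟩
  rcases Round (G := G) hm 0 X2 (r12.valid hv) c2 with ⟨X3, r3, c3⟩ | ⟨X3, r3, c3, d3, l3, k3⟩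
  · exact ⟨X3, (r12.trans r3).tt (by omega), c3⟩
  have r13 := r12.trans r3
  obtain ⟨X4, r4, c4⟩ := CaseI (G := G) hm 0 X3 (r13.valid hv) c3 d3 (k3 h) l3
  exact ⟨X4, (r13.trans r4).tt (by omega), c4⟩

/-- arc run: complement of the arc is `P b 1, …, P b e`; only its two ends may be dirty. -/
theorem ArcRun (b : ZMod m) (e : ℕ) (he : e < m) (X : St m M) (hv : ∀ t, X.s t ∈ G.C t)
    (hc : ∀ i, 1 < i → i < e → clean G X (P b i)) :
    ∃ X', Reach G (Iv b e) (2 * (m * m)) X X' ∧ ∀ i, 1 ≤ i → i ≤ e → clean G X' (P b i) := by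
  rcases Nat.eq_zero_or_pos e with h0 | h0
  · exact ⟨X, Reach.refl _ _, fun i h1 h2 => by omega⟩
  obtain ⟨f1, X1, q1, q2, q3, q4, q5⟩ := RR (G := G) b (e - 1) (by omega) _ 1 le_rfl (by omega) rfl X hv
    (fun i h1 h2 => by omega) (fun i h1 h2 => hc i h1 (by omega))
  have hcl : ∀ i, 1 ≤ i → i < e → clean G X1 (P b i) := by
    intro i h1 h2
    rcases Nat.lt_or_ge i f1 with h | h
    · exact (q4 i h1 h).clean
    · exact q5 i h (by omega)
  have hPP : ∀ i, m - e ≤ i → P (P b (e + 1)) i = P b (i + e + 1 - m) := by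
    intro i hi
    rw [P_P]
    have : e + 1 + i = (i + e + 1 - m) + m := by omega
    rw [this, ← P_P, P_m]
  obtain ⟨g, X2, g1, g2, g3, g4, g5⟩ := LL (G := G) (P b (e + 1)) e he X1 (q3.valid hv) (by
    intro i h1 h2
    rw [hPP i h1]
    exact hcl _ (by omega) (by omega))
  refine ⟨X2, ((q3.mono le_rfl (Iv.mono (by omega))).trans (g3.mono le_rfl ?_)).mono ?_ (fun _ h => h), ?_⟩
  · rintro x ⟨i, h1, h2, h3⟩
    rw [hPP i (by omega)] at h3
    exact ⟨_, by omega, by omega, h3⟩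
  · have b3 : m * (e - 1 + 1 - 1) ≤ m * m := Nat.mul_le_mul_left _ (by omega)
    have b4 : m * e ≤ m * m := Nat.mul_le_mul_left _ (by omega)
    omega
  · intro i h1 h2
    have := hPP (i + m - e - 1)
    by_cases h : m - e ≤ i + m - e - 1
    · have e1 := hPP _ h
      rw [show i + m - e - 1 + e + 1 - m = i by omega] at e1
      rw [← e1]
      rcases Nat.lt_or_ge g (i + m - e - 1) with h' | h'
      · exact (g4 _ h' (by omega)).clean
      · exact g5 _ h h'
    · omega

end red4

set_option linter.unusedSectionVars false

structure Chain {V : Type} (m n : ℕ) (adj : V → V → Prop) (N : ZMod m → ℕ → V) (κ : ZMod m → ℕ) : Prop where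
  hm : 2 ≤ m
  hn : 3 ≤ n
  κ1 : ∀ t, 1 ≤ κ t
  κn : ∀ t, κ t < n
  share : ∀ t, N t 0 = N (t + 1) (κ t)
  inj : ∀ t i t' i', i < n → i' < n → N t i = N t' i' →
    (t = t' ∧ i = i') ∨ (t' = t + 1 ∧ i = 0 ∧ i' = κ t) ∨ (t = t' + 1 ∧ i' = 0 ∧ i = κ t')
  surj : ∀ v, ∃ t i, i < n ∧ N t i = v
  hadj : ∀ u v, adj u v ↔ ∃ t i, i < n ∧ u = N t i ∧ v = N t ((i + 1) % n)

section real
variable {V M : Type} [Fintype V] {m n : ℕ} {adj : V → V → Prop} {N : ZMod m → ℕ → V} {κ : ZMod m → ℕ}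
  {C : V → Finset M} {s s' s'' : V → M}

def ns (n : ℕ) (κ : ZMod m → ℕ) (t : ZMod m) (i : ℕ) : Prop := 1 ≤ i ∧ i < n ∧ i ≠ κ (t - 1)

noncomputable def pay (adj : V → V → Prop) (s : V → M) (x : V) : ℕ :=
  (Finset.univ.filter (fun j => adj j x ∧ s j = s x)).card

theorem payoff_eq (s : V → M) (x : V) :
    payoff adj (fun _ _ => 1) (fun _ _ => 0) s x = (pay adj s x : ℝ) := by
  unfold payoff pay; simp

abbrev PD (adj : V → V → Prop) (C : V → Finset M) (s s' : V → M) : Prop :=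
  ProfDev adj (fun _ _ => 1) (fun _ _ => 0) C s s'

theorem PD_iff : PD adj C s s' ↔ Valid C s' ∧ s ≠ s' ∧ ∀ x, s x ≠ s' x → pay adj s x < pay adj s' x := by
  unfold PD ProfDev
  simp only [payoff_eq, Nat.cast_lt]

variable (H : Chain m n adj N κ)
include H

theorem Chain.ns_inj {t t' : ZMod m} {i i' : ℕ} (h : ns n κ t i) (hi : i' < n) (e : N t i = N t' i') :
    t' = t ∧ i' = i := by
  rcases H.inj t i t' i' h.2.1 hi e with ⟨h1, h2⟩ | ⟨h1, h2, h3⟩ | ⟨h1, h2, h3⟩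
  · exact ⟨h1.symm, h2.symm⟩
  · have := h.1; omega
  · exact absurd (by rw [h3, h1]; simp) h.2.2

theorem Chain.sh_inj {t t' : ZMod m} (e : N t 0 = N t' 0) : t = t' := by
  have := H.hn
  rcases H.inj t 0 t' 0 (by omega) (by omega) e with ⟨h1, h2⟩ | ⟨h1, h2, h3⟩ | ⟨h1, h2, h3⟩
  · exact h1
  · have := H.κ1 t; omega
  · have := H.κ1 t'; omega

theorem Chain.cases (x : V) : (∃ t, x = N t 0) ∨ ∃ t i, ns n κ t i ∧ x = N t i := by
  obtain ⟨t, i, hi, rfl⟩ := H.surj x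
  by_cases h0 : i = 0
  · subst h0; left; exact ⟨t, rfl⟩
  by_cases hk : i = κ (t - 1)
  · left; refine ⟨t - 1, ?_⟩; rw [H.share, hk]; simp
  · right; exact ⟨t, i, ⟨by omega, hi, hk⟩, rfl⟩

theorem Chain.adj_ns {t : ZMod m} {i : ℕ} (h : ns n κ t i) (u : V) : adj u (N t i) ↔ u = N t (i - 1) := by
  rw [H.hadj]
  have hn := H.hn
  constructor
  · rintro ⟨t', i', h1, h2, h3⟩
    obtain ⟨rfl, h5⟩ := H.ns_inj h (Nat.mod_lt _ (by omega)) h3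
    rw [h2]
    have := h.1
    congr 1
    rcases Nat.lt_or_ge (i' + 1) n with h6 | h6
    · rw [Nat.mod_eq_of_lt h6] at h5; omega
    · rw [show i' + 1 = n by omega, Nat.mod_self] at h5; omega
  · rintro rfl
    have := h.1
    have := h.2.1
    refine ⟨t, i - 1, by omega, rfl, ?_⟩
    rw [show i - 1 + 1 = i by omega, Nat.mod_eq_of_lt h.2.1]

theorem Chain.adj_sh (t : ZMod m) (u : V) :
    adj u (N t 0) ↔ u = N t (n - 1) ∨ u = N (t + 1) (κ t - 1) := by
  rw [H.hadj]
  have hn := H.hn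
  have h1 := H.κ1 t
  have h2 := H.κn t
  constructor
  · rintro ⟨t', i', q1, rfl, q3⟩
    rcases Nat.lt_or_ge (i' + 1) n with h6 | h6
    · rw [Nat.mod_eq_of_lt h6] at q3
      rcases H.inj _ _ _ _ (by omega) h6 q3 with ⟨h1, h2⟩ | ⟨h1, h2, h3⟩ | ⟨h1, h2, h3⟩
      · omega
      · right; rw [h1, ← h3]; simp
      · omega
    · rw [show i' + 1 = n by omega, Nat.mod_self] at q3
      left
      rw [H.sh_inj q3, show i' = n - 1 by omega]
  · rintro (rfl | rfl)
    · refine ⟨t, n - 1, by omega, rfl, ?_⟩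
      rw [show n - 1 + 1 = n by omega, Nat.mod_self]
    · refine ⟨t + 1, κ t - 1, by omega, rfl, ?_⟩
      rw [show κ t - 1 + 1 = κ t by omega, Nat.mod_eq_of_lt h2, H.share]

theorem Chain.pay_ns {t : ZMod m} {i : ℕ} (h : ns n κ t i) (s : V → M) :
    pay adj s (N t i) = if s (N t (i - 1)) = s (N t i) then 1 else 0 := by
  unfold pay
  simp only [H.adj_ns h]
  split_ifs with h1
  · rw [Finset.card_eq_one]
    refine ⟨N t (i - 1), ?_⟩
    ext j; simp; rintro rfl; exact h1
  · rw [Finset.card_eq_zero, Finset.filter_eq_empty_iff]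
    rintro x - ⟨rfl, h2⟩; exact h1 h2

theorem Chain.pay_sh (t : ZMod m) (s : V → M) :
    pay adj s (N t 0) = (if s (N t (n - 1)) = s (N t 0) then 1 else 0) +
      (if N t (n - 1) ≠ N (t + 1) (κ t - 1) ∧ s (N (t + 1) (κ t - 1)) = s (N t 0) then 1 else 0) := by
  unfold pay
  simp only [H.adj_sh t]
  generalize N t (n - 1) = p
  generalize N (t + 1) (κ t - 1) = q
  generalize s (N t 0) = d
  have : (Finset.univ.filter (fun j => (j = p ∨ j = q) ∧ s j = d)) = ({p, q} : Finset V).filter (fun j => s j = d) := by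
    ext j; simp
  rw [this]
  by_cases hpq : p = q
  · subst hpq
    simp [Finset.filter_singleton]
    split_ifs <;> rfl
  · rw [Finset.filter_insert, Finset.filter_singleton]
    simp only [hpq, ne_eq, not_false_eq_true, true_and]
    split_ifs <;> simp [hpq]

theorem Chain.lp_ne (t : ZMod m) : N t (n - 1) ≠ N t 0 := by
  intro h
  have hn := H.hn
  rcases H.inj _ _ _ _ (by omega) (by omega) h with ⟨h1, h2⟩ | ⟨h1, h2, h3⟩ | ⟨h1, h2, h3⟩
  · omega
  · omega
  · exact add_one_ne H.hm t h1.symm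

theorem Chain.rp_ne (t : ZMod m) : N (t + 1) (κ t - 1) ≠ N t 0 := by
  intro h
  have h1 := H.κ1 t
  have h2 := H.κn t
  rw [H.share] at h
  rcases H.inj _ _ _ _ (by omega) (by omega) h with ⟨h1, h2⟩ | ⟨h1, h2, h3⟩ | ⟨h1, h2, h3⟩
  · omega
  · exact add_one_ne H.hm (t+1) h1.symm
  · exact add_one_ne H.hm (t+1) h1.symm

def mono (n : ℕ) (N : ZMod m → ℕ → V) (s : V → M) (t : ZMod m) : Prop := ∀ i, i < n → s (N t i) = s (N t 0)

theorem Chain.ns_lt {t : ZMod m} {i : ℕ} (h : ns n κ t i) (hp : PD adj C s s') (hs : s (N t (i-1)) = s (N t i)) :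
    s' (N t i) = s (N t i) := by
  by_contra hne
  have := (PD_iff.1 hp).2.2 _ (Ne.symm hne)
  rw [H.pay_ns h, H.pay_ns h, if_pos hs] at this
  split_ifs at this <;> omega

theorem Chain.sh_lt {t : ZMod m} (hp : PD adj C s s') (hne : s (N t 0) ≠ s' (N t 0)) :
    (s' (N t (n-1)) = s' (N t 0) ∨ s' (N (t+1) (κ t - 1)) = s' (N t 0)) ∧
    ((s (N t (n-1)) = s (N t 0) ∨ s (N (t+1) (κ t - 1)) = s (N t 0)) →
      s' (N t (n-1)) = s' (N t 0) ∧ s' (N (t+1) (κ t - 1)) = s' (N t 0) ∧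
      ¬ (s (N t (n-1)) = s (N t 0) ∧ s (N (t+1) (κ t - 1)) = s (N t 0))) := by
  have := (PD_iff.1 hp).2.2 _ hne
  rw [H.pay_sh, H.pay_sh] at this
  by_cases hpq : N t (n-1) = N (t+1) (κ t - 1)
  · rw [← hpq] at this ⊢
    simp only [ne_eq, not_true_eq_false, false_and, if_false] at this
    split_ifs at this <;> grind
  · simp only [ne_eq, hpq, not_false_eq_true, true_and] at this
    split_ifs at this <;> grind

theorem Chain.mono_perm {t : ZMod m} (hp : PD adj C s s') (h : mono n N s t) :
    ∀ i, i < n → s' (N t i) = s (N t i) := by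
  have hn := H.hn
  have hk1 := H.κ1 (t - 1)
  have hkn := H.κn (t - 1)
  have hsh : N (t - 1) 0 = N t (κ (t - 1)) := by rw [H.share]; simp
  have hns : ∀ i, ns n κ t i → s' (N t i) = s (N t i) := by
    intro i hi
    apply H.ns_lt hi hp
    have := hi.2.1
    rw [h _ (by omega), h i (by omega)]
  have A0 : s' (N t 0) ≠ s (N t 0) → s' (N t (n - 1)) ≠ s (N t (n - 1)) := by
    intro h1 h2
    have := (H.sh_lt hp h1.symm).2 (Or.inl (h _ (by omega)))
    apply h1
    rw [← this.1, h2, h _ (by omega)]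
  have B0 : s' (N t (κ (t-1))) ≠ s (N t (κ (t-1))) → s' (N t (κ (t-1) - 1)) ≠ s (N t (κ (t-1) - 1)) := by
    intro h1 h2
    rw [← hsh] at h1
    have := (H.sh_lt hp h1.symm).2
    simp only [sub_add_cancel] at this
    have h3 := this (Or.inr (by rw [h _ (by omega), hsh, h _ hkn]))
    apply h1
    rw [← h3.2.1, h2, hsh, h _ (by omega), h _ hkn]
  intro i hi
  by_contra hne
  have hA : s' (N t 0) = s (N t 0) := by
    by_contra h1
    have h2 := A0 h1
    by_cases hk : n - 1 = κ (t - 1)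
    · rw [hk] at h2
      have h3 := B0 h2
      exact h3 (hns _ ⟨by omega, by omega, by omega⟩)
    · exact h2 (hns _ ⟨by omega, by omega, hk⟩)
  by_cases h0 : i = 0
  · subst h0; exact hne hA
  by_cases hk : i = κ (t - 1)
  · subst hk
    have h3 := B0 hne
    by_cases h4 : κ (t - 1) - 1 = 0
    · rw [h4] at h3; exact h3 hA
    · exact h3 (hns _ ⟨by omega, by omega, by omega⟩)
  · exact hne (hns _ ⟨by omega, by omega, hk⟩)

theorem Chain.mono_mono {t : ZMod m} (hp : PD adj C s s') (h : mono n N s t) : mono n N s' t := by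
  have := H.mono_perm hp h
  have hn := H.hn
  intro i hi
  rw [this i hi, this 0 (by omega), h i hi]

end real

inductive RP {V M : Type} [Fintype V] (adj : V → V → Prop) (C : V → Finset M) : ℕ → (V → M) → (V → M) → Prop
  | refl (k : ℕ) (s : V → M) : RP adj C k s s
  | step (k : ℕ) (s s1 s2 : V → M) : PD adj C s s1 → RP adj C k s1 s2 → RP adj C (k + 1) s s2

section real
variable {V M : Type} [Fintype V] {m n : ℕ} {adj : V → V → Prop} {N : ZMod m → ℕ → V} {κ : ZMod m → ℕ}
  {C : V → Finset M} {s s' s'' : V → M} {k l : ℕ}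

theorem RP.mono (h : RP adj C k s s') (hk : k ≤ l) : RP adj C l s s' := by
  induction h generalizing l with
  | refl k X => exact RP.refl _ _
  | step k s s1 s2 h1 h2 ih =>
    obtain ⟨l', rfl⟩ : ∃ l', l = l' + 1 := ⟨l - 1, by omega⟩
    exact RP.step _ _ _ _ h1 (ih (by omega))

theorem RP.trans (h : RP adj C k s s') (h' : RP adj C l s' s'') : RP adj C (k + l) s s'' := by
  induction h with
  | refl k X => exact h'.mono (by omega)
  | step k s s1 s2 h1 h2 ih =>
    rw [show k + 1 + l = (k + l) + 1 by ring]
    exact RP.step _ _ _ _ h1 (ih h')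

theorem RP.valid (h : RP adj C k s s') (hv : Valid C s) : Valid C s' := by
  induction h with
  | refl k X => exact hv
  | step k s s1 s2 h1 h2 ih => exact ih h1.1

theorem RP.mono_mono (H : Chain m n adj N κ) {t : ZMod m} (h : RP adj C k s s') (hv : CG.mono n N s t) : CG.mono n N s' t := by
  induction h with
  | refl k X => exact hv
  | step k s s1 s2 h1 h2 ih => exact ih (H.mono_mono h1 hv)

theorem RP.to_path (h : RP adj C k s s') (hs : IsStrong adj (fun _ _ => 1) (fun _ _ => 0) C s') :
    ∃ L, L ≤ k ∧ CImpPath adj (fun _ _ => 1) (fun _ _ => 0) C s L := by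
  induction h with
  | refl k X => exact ⟨0, by omega, fun _ => X, rfl, fun t ht => by omega, hs⟩
  | step k s s1 s2 h1 h2 ih =>
    obtain ⟨L, hL, σ, e1, e2, e3⟩ := ih hs
    refine ⟨L + 1, by omega, fun i => if i = 0 then s else σ (i - 1), by simp, ?_, ?_⟩
    · intro t ht
      rcases Nat.eq_zero_or_pos t with h | h
      · subst h; simp; rw [e1]; exact h1
      · have := e2 (t - 1) (by omega)
        simp only []
        rw [if_neg (by omega), if_neg (by omega)]
        rw [show t - 1 + 1 = t + 1 - 1 by omega] at this
        exact this
    · simpa using e3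

end real

set_option linter.unusedSectionVars false
section real
variable {V M : Type} [Fintype V] {m n : ℕ} {adj : V → V → Prop} {N : ZMod m → ℕ → V} {κ : ZMod m → ℕ}
  {C : V → Finset M} {s s' s'' : V → M} {k l : ℕ}

theorem settle_aux (H : Chain m n adj N κ) (hv : Valid C s) : ∀ j, j < n → ∃ s1, RP adj C j s s1 ∧
    (∀ t, s1 (N t 0) = s (N t 0)) ∧
    (∀ t i, ns n κ t i → i ≤ j → s1 (N t i) = if s1 (N t (i-1)) ∈ C (N t i) then s1 (N t (i-1)) else s (N t i)) ∧
    (∀ t i, ns n κ t i → j < i → s1 (N t i) = s (N t i)) := by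
  intro j
  induction j with
  | zero =>
    intro _
    exact ⟨s, RP.refl _ _, fun _ => rfl, fun t i h h' => by have := h.1; omega, fun _ _ _ _ => rfl⟩
  | succ j ih =>
    intro hj
    obtain ⟨s1, r1, a1, b1, c1⟩ := ih (by omega)
    have hv1 := r1.valid hv
    let s2 : V → M := fun x => if h : ∃ t, ns n κ t (j+1) ∧ x = N t (j+1) ∧ s1 (N t j) ∈ C x then s1 (N h.choose j) else s1 x
    have e1 : ∀ x, (∀ t, ns n κ t (j+1) → x ≠ N t (j+1)) → s2 x = s1 x := by
      intro x hx
      simp only [s2]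
      rw [dif_neg]
      rintro ⟨t, h1, h2, -⟩; exact hx t h1 h2
    have e2 : ∀ t, ns n κ t (j+1) → s2 (N t (j+1)) = if s1 (N t j) ∈ C (N t (j+1)) then s1 (N t j) else s1 (N t (j+1)) := by
      intro t ht
      simp only [s2]
      split_ifs with h1 h2 h2
      · have := (H.ns_inj ht hj h1.choose_spec.2.1).1
        rw [this]
      · exfalso
        have h3 := (H.ns_inj ht hj h1.choose_spec.2.1).1
        have h4 := h1.choose_spec.2.2
        rw [h3] at h4; exact h2 h4
      · exfalso; exact h1 ⟨t, ht, rfl, h2⟩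
      · rfl
    have e3 : ∀ t i, i ≤ j → s2 (N t i) = s1 (N t i) := by
      intro t i hi
      apply e1
      intro t' ht' h
      have := (H.ns_inj ht' (by omega) h.symm).2
      omega
    have hv2 : Valid C s2 := by
      intro x
      by_cases hx : ∃ t, ns n κ t (j+1) ∧ x = N t (j+1)
      · obtain ⟨t, h1, rfl⟩ := hx
        rw [e2 t h1]; split_ifs with h
        · exact h
        · exact hv1 _
      · rw [e1 x (fun t h1 h2 => hx ⟨t, h1, h2⟩)]; exact hv1 x
    have step : RP adj C 1 s1 s2 := by
      by_cases heq : s1 = s2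
      · rw [← heq]; exact RP.refl _ _
      · refine RP.step _ _ _ _ (PD_iff.2 ⟨hv2, heq, ?_⟩) (RP.refl _ _)
        intro x hx
        by_cases hx' : ∃ t, ns n κ t (j+1) ∧ x = N t (j+1)
        · obtain ⟨t, h1, rfl⟩ := hx'
          rw [H.pay_ns h1, H.pay_ns h1, Nat.add_sub_cancel, e3 t j le_rfl]
          rw [e2 t h1] at hx ⊢
          split_ifs at hx ⊢ with h2 h3 h4 h5 <;> simp_all
        · exact absurd (e1 x (fun t h1 h2 => hx' ⟨t, h1, h2⟩)).symm hx
    refine ⟨s2, r1.trans step, ?_, ?_, ?_⟩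
    · intro t; rw [e3 t 0 (by omega), a1]
    · intro t i hi hij
      rcases Nat.lt_or_ge j i with h | h
      · have : i = j + 1 := by omega
        subst this
        rw [e2 t hi, Nat.add_sub_cancel, e3 t j le_rfl, c1 t _ hi h]
      · rw [e3 t i h, e3 t (i-1) (by omega), b1 t i hi h]
    · intro t i hi hij
      rw [e1, c1 t i hi (by omega)]
      intro t' ht' h
      have := (H.ns_inj hi hj h).2
      omega

def Settled (n : ℕ) (N : ZMod m → ℕ → V) (κ : ZMod m → ℕ) (C : V → Finset M) (s : V → M) : Prop :=
  ∀ t i, ns n κ t i → s (N t (i-1)) ∈ C (N t i) → s (N t i) = s (N t (i-1))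

theorem settle (H : Chain m n adj N κ) (hv : Valid C s) : ∃ s1, RP adj C n s s1 ∧ Settled n N κ C s1 ∧
    (∀ t, s1 (N t 0) = s (N t 0)) ∧
    (∀ t i, ns n κ t i → s1 (N t i) = if s1 (N t (i-1)) ∈ C (N t i) then s1 (N t (i-1)) else s (N t i)) := by
  have hn := H.hn
  obtain ⟨s1, r1, a1, b1, c1⟩ := settle_aux H hv (n-1) (by omega)
  have b2 : ∀ t i, ns n κ t i → s1 (N t i) = if s1 (N t (i-1)) ∈ C (N t i) then s1 (N t (i-1)) else s (N t i) := by
    intro t i hi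
    have := hi.2.1
    exact b1 t i hi (by omega)
  refine ⟨s1, r1.mono (by omega), ?_, a1, b2⟩
  intro t i hi h
  rw [b2 t i hi, if_pos h]

theorem path_push (hset : Settled n N κ C s) {s1 s'' : V → M} (t : ZMod m) (i0 i1 : ℕ) (y : Prop) (c : M)
    (hns : ∀ i, i0 < i → i < i1 → ns n κ t i)
    (h1 : ∀ t i, ns n κ t i → s1 (N t i) = if s1 (N t (i-1)) ∈ C (N t i) then s1 (N t (i-1)) else s'' (N t i))
    (h0 : s1 (N t i0) = if y then c else s (N t i0))
    (h2 : ∀ i, i0 < i → i < i1 → s'' (N t i) = s (N t i) ∨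
      (s'' (N t i) = c ∧ y ∧ ∀ i', i0 < i' → i' ≤ i → c ∈ C (N t i'))) :
    ∀ d, i0 + d < i1 → s1 (N t (i0 + d)) =
      if (y ∧ ∀ i', i0 < i' → i' ≤ i0 + d → c ∈ C (N t i')) then c else s (N t (i0 + d)) := by
  intro d
  induction d with
  | zero =>
    intro _
    rw [Nat.add_zero, h0]
    by_cases hy : y
    · rw [if_pos hy, if_pos ⟨hy, fun i' h h' => by omega⟩]
    · rw [if_neg hy, if_neg (fun h => hy h.1)]
  | succ d ih =>
    intro hd
    have ih := ih (by omega)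
    have hn := hns (i0 + (d + 1)) (by omega) hd
    have e := h1 t _ hn
    have e2 := h2 _ (by omega) hd
    have e3 := hset t _ hn
    rw [show i0 + (d + 1) - 1 = i0 + d by omega] at e e3
    by_cases hQ : y ∧ ∀ i', i0 < i' → i' ≤ i0 + (d + 1) → c ∈ C (N t i')
    · rw [if_pos hQ]
      rw [if_pos ⟨hQ.1, fun i' h h' => hQ.2 i' h (by omega)⟩] at ih
      rw [e, ih, if_pos (hQ.2 _ (by omega) le_rfl)]
    · rw [if_neg hQ]
      have e2' : s'' (N t (i0 + (d + 1))) = s (N t (i0 + (d + 1))) := by tauto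
      rw [e2'] at e
      by_cases hQ' : y ∧ ∀ i', i0 < i' → i' ≤ i0 + d → c ∈ C (N t i')
      · rw [if_pos hQ'] at ih
        rw [e, ih, if_neg]
        intro h
        apply hQ
        refine ⟨hQ'.1, fun i' h1 h2 => ?_⟩
        by_cases hi : i' = i0 + (d + 1)
        · subst hi; exact h
        · exact hQ'.2 i' h1 (by omega)
      · rw [if_neg hQ'] at ih
        rw [e, ih]
        split_ifs with h
        · exact (e3 h).symm
        · rfl

def Gr (n : ℕ) (N : ZMod m → ℕ → V) (κ : ZMod m → ℕ) (C : V → Finset M) : Sys m M where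
  C := fun t => {c | c ∈ C (N t 0)}
  T := fun t => {c | ∀ i, κ (t - 1) < i → i < n → c ∈ C (N t i)}
  U := fun t => {c | ∀ i, 0 < i → i < κ t → c ∈ C (N (t + 1) i)}

def Red (n : ℕ) (N : ZMod m → ℕ → V) (κ : ZMod m → ℕ) (s : V → M) : St m M where
  s := fun t => s (N t 0)
  L := fun t => s (N t (n - 1))
  R := fun t => s (N (t + 1) (κ t - 1))

noncomputable def pushSt (G : Sys m M) (X : St m M) (Y : ZMod m → Prop) (c : M) : St m M where
  s := fun t => if Y t then c else X.s t
  L := fun t => if Y (t - 1) ∧ c ∈ G.T t then c else X.L t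
  R := fun t => if Y (t + 1) ∧ c ∈ G.U t then c else X.R t

theorem ns_up (H : Chain m n adj N κ) (t : ZMod m) {i : ℕ} (h1 : κ (t-1) < i) (h2 : i < n) : ns n κ t i :=
  ⟨by omega, h2, by omega⟩
theorem ns_dn (H : Chain m n adj N κ) (t : ZMod m) {i : ℕ} (h1 : 0 < i) (h2 : i < κ (t-1)) : ns n κ t i :=
  ⟨by omega, by have := H.κn (t-1); omega, by omega⟩

theorem push (H : Chain m n adj N κ) (hset : Settled n N κ C s) (hv'' : Valid C s'') (Y : ZMod m → Prop) (c : M)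
    (h0 : ∀ t, s'' (N t 0) = if Y t then c else s (N t 0))
    (hup : ∀ t i, κ (t-1) < i → i < n → s'' (N t i) = s (N t i) ∨
      (s'' (N t i) = c ∧ Y (t-1) ∧ ∀ i', κ (t-1) < i' → i' ≤ i → c ∈ C (N t i')))
    (hdn : ∀ t i, 0 < i → i < κ (t-1) → s'' (N t i) = s (N t i) ∨
      (s'' (N t i) = c ∧ Y t ∧ ∀ i', 0 < i' → i' ≤ i → c ∈ C (N t i'))) :
    ∃ s1, RP adj C n s'' s1 ∧ Settled n N κ C s1 ∧ Red n N κ s1 = pushSt (Gr n N κ C) (Red n N κ s) Y c := by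
  obtain ⟨s1, r1, g1, a1, b1⟩ := settle H hv''
  have hn := H.hn
  refine ⟨s1, r1, g1, ?_⟩
  have hsh : ∀ t, N t (κ (t - 1)) = N (t - 1) 0 := fun t => by rw [H.share]; simp
  ext t
  · simp only [Red, pushSt]; rw [a1, h0]
  · have hk := H.κn (t-1)
    have := path_push hset t (κ (t-1)) n (Y (t-1)) c (fun i h h' => ns_up H t h h') b1
      (by rw [hsh, a1, h0]) (hup t) (n - 1 - κ (t-1)) (by omega)
    rw [show κ (t-1) + (n - 1 - κ (t-1)) = n - 1 by omega] at this
    simp only [Red, pushSt, Gr]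
    rw [this]
    congr 1
    simp only [Set.mem_ofPred_eq, eq_iff_iff]
    refine and_congr_right fun _ => ?_
    exact ⟨fun h i h1 h2 => h i h1 (by omega), fun h i h1 h2 => h i h1 (by omega)⟩
  · have hk := H.κn t
    have hk1 := H.κ1 t
    have := path_push hset (t+1) 0 (κ t) (Y (t+1)) c (fun i h h' => ns_dn H (t+1) h (by simpa using h')) b1
      (by rw [a1, h0]) (by simpa using hdn (t+1)) (κ t - 1) (by omega)
    simp only [Red, pushSt, Gr]
    rw [Nat.zero_add] at this
    rw [this]
    congr 1
    simp only [Set.mem_ofPred_eq, eq_iff_iff]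
    refine and_congr_right fun _ => ?_
    exact ⟨fun h i h1 h2 => h i h1 (by omega), fun h i h1 h2 => h i h1 (by omega)⟩

theorem sim (H : Chain m n adj N κ) {A : ZMod m → Prop} {X X' : St m M} (h : Reach (Gr n N κ C) A k X X') :
    ∀ s, Valid C s → Settled n N κ C s → Red n N κ s = X →
    ∃ s', RP adj C (k * (n + 1)) s s' ∧ Settled n N κ C s' ∧ Red n N κ s' = X' := by
  induction h with
  | refl k X => intro s hv hs hX; exact ⟨s, RP.refl _ _, hs, hX⟩
  | step k X X' t c h1 h2 h3 h4 h5 h6 ih =>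
    intro s hv hs hX
    subst hX
    simp only [Red, Gr] at h2 h3 h4 h5
    let s2 : V → M := fun x => if x = N t 0 then c else s x
    have hv2 : Valid C s2 := by
      intro x; simp only [s2]; split_ifs with h
      · rw [h]; exact h2
      · exact hv x
    have e0 : s2 (N t 0) = c := by simp [s2]
    have eL : s2 (N t (n-1)) = s (N t (n-1)) := by simp only [s2]; rw [if_neg (H.lp_ne t)]
    have eR : s2 (N (t+1) (κ t - 1)) = s (N (t+1) (κ t - 1)) := by simp only [s2]; rw [if_neg (H.rp_ne t)]
    have cne : s (N t 0) ≠ c := by rcases h5 with h | h <;> rw [h] <;> assumption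
    have pd : PD adj C s s2 := by
      refine PD_iff.2 ⟨hv2, fun h => cne (by rw [← e0, ← h]), ?_⟩
      intro x hx
      have : x = N t 0 := by
        by_contra h
        apply hx; simp only [s2]; rw [if_neg h]
      subst this
      rw [H.pay_sh, H.pay_sh, e0, eL, eR, if_neg (Ne.symm h3), if_neg (fun h => h4 h.2.symm)]
      rcases h5 with h | h
      · rw [if_pos h.symm]; omega
      · by_cases hpq : N t (n - 1) = N (t + 1) (κ t - 1)
        · rw [if_pos (by rw [hpq]; exact h.symm)]; omega
        · rw [if_pos (⟨hpq, h.symm⟩ : _ ≠ _ ∧ _)]; omega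
    have nsne : ∀ t' i, ns n κ t' i → s2 (N t' i) = s (N t' i) := by
      intro t' i hi
      simp only [s2]; rw [if_neg]
      intro h
      have := (H.ns_inj hi (by have := H.hn; omega) h).2
      have := hi.1; omega
    obtain ⟨s3, r3, g3, q3⟩ := push H hs hv2 (fun x => x = t) c (by
      intro t'
      simp only [s2]
      by_cases h : t' = t
      · subst h; simp
      · rw [if_neg h, if_neg (fun h' => h (H.sh_inj h'))])
      (fun t' i h h' => Or.inl (nsne t' i (ns_up H t' h h'))) (fun t' i h h' => Or.inl (nsne t' i (ns_dn H t' h h')))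
    have hq : pushSt (Gr n N κ C) (Red n N κ s) (fun x => x = t) c = fire (Gr n N κ C) (Red n N κ s) t c := by
      ext x
      · simp [pushSt, fire]
      · simp only [pushSt, fire, sub_eq_iff_eq_add]
      · simp only [pushSt, fire]; split_ifs <;> first | rfl | tauto
    rw [hq] at q3
    have r13 : RP adj C (n + 1) s s3 := RP.step _ _ _ _ pd r3
    obtain ⟨s4, r4, g4, q4⟩ := ih s3 (r13.valid hv) g3 q3
    exact ⟨s4, (r13.trans r4).mono (by rw [add_mul]; omega), g4, q4⟩

end real

set_option linter.unusedSectionVars false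
set_option linter.unusedVariables false
section real
variable {V M : Type} [Fintype V] {m n : ℕ} {adj : V → V → Prop} {N : ZMod m → ℕ → V} {κ : ZMod m → ℕ}
  {C : V → Finset M} {s s' s'' : V → M} {k l : ℕ} {c : M}

def KK (s s' : V → M) (c : M) (x : V) : Prop := s x ≠ s' x ∧ s' x = c

theorem K_mem (hp : PD adj C s s') {x : V} (h : KK s s' c x) : c ∈ C x := by
  rw [← h.2]; exact hp.1 x

theorem K_pred (H : Chain m n adj N κ) (hset : Settled n N κ C s) (hp : PD adj C s s') {t : ZMod m} {i : ℕ}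
    (h : ns n κ t i) (hK : KK s s' c (N t i)) : KK s s' c (N t (i - 1)) := by
  have h1 := (PD_iff.1 hp).2.2 _ hK.1
  rw [H.pay_ns h, H.pay_ns h] at h1
  have h2 : s' (N t (i-1)) = s' (N t i) := by
    by_contra h3
    rw [if_neg h3] at h1; omega
  refine ⟨fun h3 => ?_, h2.trans hK.2⟩
  have h4 := hset t i h (by rw [h3, h2]; exact hp.1 _)
  exact hK.1 (by rw [h4, h3, h2])

theorem K_path (H : Chain m n adj N κ) (hset : Settled n N κ C s) (hp : PD adj C s s') {t : ZMod m} {i0 i : ℕ}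
    (hns : ∀ j, i0 < j → j ≤ i → ns n κ t j) (hK : KK s s' c (N t i)) :
    ∀ j, i0 ≤ j → j ≤ i → KK s s' c (N t j) := by
  have : ∀ d, i0 ≤ i - d → KK s s' c (N t (i - d)) := by
    intro d
    induction d with
    | zero => intro _; exact hK
    | succ d ih =>
      intro h
      by_cases h0 : i - d = i - (d+1)
      · rw [← h0]; exact ih (by omega)
      · have := K_pred H hset hp (hns (i - d) (by omega) (by omega)) (ih (by omega))
        rwa [show i - d - 1 = i - (d+1) by omega] at this
  intro j h1 h2
  have := this (i - j) (by omega)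
  rwa [show i - (i - j) = j by omega] at this

theorem Chain.share' (H : Chain m n adj N κ) (t : ZMod m) : N t (κ (t - 1)) = N (t - 1) 0 := by
  rw [H.share]; simp

theorem K_A (H : Chain m n adj N κ) (hset : Settled n N κ C s) (hp : PD adj C s s') {t : ZMod m}
    (hK : KK s s' c (N t (n-1))) : ∀ j, κ (t-1) ≤ j → j < n → KK s s' c (N t j) := by
  intro j h1 h2
  exact K_path H hset hp (i0 := κ (t-1)) (i := n-1) (fun j h1 h2 => ns_up H t h1 (by omega)) hK j h1 (by omega)

theorem K_B (H : Chain m n adj N κ) (hset : Settled n N κ C s) (hp : PD adj C s s') {t : ZMod m}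
    (hK : KK s s' c (N (t+1) (κ t-1))) : ∀ j, j < κ t → KK s s' c (N (t+1) j) := by
  intro j h1
  have := H.κ1 t
  exact K_path H hset hp (i0 := 0) (i := κ t-1) (fun j h1 h2 => ns_dn H (t+1) h1 (by
    rw [add_sub_cancel_right]; omega)) hK j (by omega) (by omega)

theorem K_A1 (H : Chain m n adj N κ) (hset : Settled n N κ C s) (hp : PD adj C s s') {t : ZMod m}
    (hK : KK s s' c (N t (n-1))) : KK s s' c (N (t-1) 0) ∧ c ∈ (Gr n N κ C).T t := by
  have := K_A H hset hp hK
  refine ⟨by rw [← H.share']; exact this _ le_rfl (H.κn _), ?_⟩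
  intro i h1 h2
  exact K_mem hp (this i h1.le h2)

theorem K_B1 (H : Chain m n adj N κ) (hset : Settled n N κ C s) (hp : PD adj C s s') {t : ZMod m}
    (hK : KK s s' c (N (t+1) (κ t-1))) : KK s s' c (N (t+1) 0) ∧ c ∈ (Gr n N κ C).U t := by
  have := K_B H hset hp hK
  refine ⟨this 0 (H.κ1 t), ?_⟩
  intro i h1 h2
  exact K_mem hp (this i h2)

theorem K_ex (H : Chain m n adj N κ) (hset : Settled n N κ C s) (hp : PD adj C s s') :
    ∃ c t, KK s s' c (N t 0) := by
  have h1 : ∃ x, s x ≠ s' x := by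
    by_contra h; push Not at h; exact hp.2.1 (funext h)
  obtain ⟨x, hx⟩ := h1
  refine ⟨s' x, ?_⟩
  have hK : KK s s' (s' x) x := ⟨hx, rfl⟩
  generalize s' x = c at hK
  rcases H.cases x with ⟨t, rfl⟩ | ⟨t, i, hi, rfl⟩
  · exact ⟨t, hK⟩
  · rcases Nat.lt_or_ge i (κ (t-1)) with h | h
    · have := K_path H hset hp (i0 := 0) (i := i) (fun j h1 h2 => ns_dn H t h1 (by omega)) hK 0 le_rfl (by omega)
      exact ⟨t, this⟩
    · have := K_path H hset hp (i0 := κ (t-1)) (i := i) (fun j h1 h2 => ns_up H t h1 (by have := hi.2.1; omega)) hK _ le_rfl h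
      rw [H.share'] at this
      exact ⟨t-1, this⟩

structure Coal (G : Sys m M) (Z : St m M) (c : M) (X A B : ZMod m → Prop) : Prop where
  A1 : ∀ t, A t → X (t-1) ∧ c ∈ G.T t
  B1 : ∀ t, B t → X (t+1) ∧ c ∈ G.U t
  F0 : ∀ t, X t → c ∈ G.C t ∧ Z.s t ≠ c
  F2 : ∀ t, X t → (A t ∨ Z.L t = c) ∨ (B t ∨ Z.R t = c)
  F3 : ∀ t, X t → (Z.s t = Z.L t ∨ Z.s t = Z.R t) →
    (A t ∨ Z.L t = c) ∧ (B t ∨ Z.R t = c) ∧ ¬ (Z.s t = Z.L t ∧ Z.s t = Z.R t)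

theorem Coal.F4 {G : Sys m M} {Z : St m M} {X A B : ZMod m → Prop} (h : Coal G Z c X A B) {t : ZMod m}
    (hX : X t) (hc : clean G Z t) : A t ∨ B t := by
  have h0 := h.F0 t hX
  have h2 := h.F2 t hX
  have h3 := h.F3 t hX
  unfold clean at hc
  grind

theorem KK.or {x : V} (h : s' x = c) : KK s s' c x ∨ s x = c := by
  unfold KK; by_cases h1 : s x = s' x
  · right; rw [h1, h]
  · left; exact ⟨h1, h⟩

theorem coal (H : Chain m n adj N κ) (hset : Settled n N κ C s) (hp : PD adj C s s') (c : M) :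
    Coal (Gr n N κ C) (Red n N κ s) c (fun t => KK s s' c (N t 0)) (fun t => KK s s' c (N t (n-1)))
      (fun t => KK s s' c (N (t+1) (κ t - 1))) where
  A1 := fun t h => K_A1 H hset hp h
  B1 := fun t h => K_B1 H hset hp h
  F0 := fun t h => ⟨K_mem hp h, fun h' => h.1 (h'.trans h.2.symm)⟩
  F2 := fun t h => by
    have := (H.sh_lt hp h.1).1
    rw [h.2] at this
    exact this.imp KK.or KK.or
  F3 := fun t h h' => by
    have := (H.sh_lt hp h.1).2 (h'.imp Eq.symm Eq.symm)
    rw [h.2] at this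
    exact ⟨KK.or this.1, KK.or this.2.1, fun h => this.2.2 ⟨h.1.symm, h.2.symm⟩⟩

theorem Apply (H : Chain m n adj N κ) (hset : Settled n N κ C s) (hv : Valid C s) (hp : PD adj C s s') (c : M)
    (Y : ZMod m → Prop) (hY : ∀ t, Y t → KK s s' c (N t 0)) (hne : ∃ t, Y t)
    (hA : ∀ t, Y t → KK s s' c (N t (n-1)) → Y (t-1))
    (hB : ∀ t, Y t → KK s s' c (N (t+1) (κ t - 1)) → Y (t+1)) :
    ∃ s1, RP adj C (n+1) s s1 ∧ Settled n N κ C s1 ∧ Red n N κ s1 = pushSt (Gr n N κ C) (Red n N κ s) Y c ∧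
      ∀ t, Y t → Y (t-1) → KK s s' c (N t (n-1)) → KK s s' c (N (t-1+1) (κ (t-1) - 1)) →
        mono n N s1 t ∧ ¬ mono n N s t := by
  have hn := H.hn
  let K' : V → Prop := fun x => (∃ t, Y t ∧ x = N t 0) ∨ (KK s s' c x ∧ ∃ t i, ns n κ t i ∧ x = N t i ∧
    (κ (t-1) < i ∧ Y (t-1) ∨ i < κ (t-1) ∧ Y t))
  let s2 : V → M := fun x => if K' x then c else s x
  have k0 : ∀ t, K' (N t 0) ↔ Y t := by
    intro t
    constructor
    · rintro (⟨t', h, h'⟩ | ⟨-, t', i, h1, h2, -⟩)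
      · rw [H.sh_inj h']; exact h
      · have := (H.ns_inj h1 (by omega) h2.symm).2
        have := h1.1; omega
    · intro h; exact Or.inl ⟨t, h, rfl⟩
  have k1 : ∀ t i, ns n κ t i → (K' (N t i) ↔ KK s s' c (N t i) ∧ (κ (t-1) < i ∧ Y (t-1) ∨ i < κ (t-1) ∧ Y t)) := by
    intro t i hi
    constructor
    · rintro (⟨t', h, h'⟩ | ⟨h0, t', i', h1, h2, h3⟩)
      · have := (H.ns_inj hi (by omega) h').2
        have := hi.1; omega
      · obtain ⟨rfl, rfl⟩ := H.ns_inj hi h1.2.1 h2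
        exact ⟨h0, h3⟩
    · rintro ⟨h, h'⟩; exact Or.inr ⟨h, t, i, hi, rfl, h'⟩
  have kK : ∀ x, K' x → KK s s' c x := by
    rintro x (⟨t, h, rfl⟩ | ⟨h, -⟩)
    · exact hY t h
    · exact h
  have kup : ∀ t i, κ (t-1) ≤ i → i < n → Y (t-1) → KK s s' c (N t i) → K' (N t i) := by
    intro t i h1 h2 h3 h4
    by_cases h : i = κ (t-1)
    · rw [h, H.share', k0]; exact h3
    · exact (k1 t i (ns_up H t (by omega) h2)).2 ⟨h4, Or.inl ⟨by omega, h3⟩⟩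
  have kdn : ∀ t i, i < κ (t-1) → Y t → KK s s' c (N t i) → K' (N t i) := by
    intro t i h1 h3 h4
    by_cases h : i = 0
    · rw [h, k0]; exact h3
    · exact (k1 t i (ns_dn H t (by omega) h1)).2 ⟨h4, Or.inr ⟨by omega, h3⟩⟩
  have hv2 : Valid C s2 := by
    intro x; simp only [s2]; split_ifs with h
    · exact K_mem hp (kK x h)
    · exact hv x
  have e2 : ∀ x, K' x → s2 x = c := fun x h => by simp only [s2]; rw [if_pos h]
  have e3 : ∀ x, ¬ K' x → s2 x = s x := fun x h => by simp only [s2]; rw [if_neg h]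
  have or2 : ∀ x, (KK s s' c x → K' x) → s' x = c → s2 x = c := by
    intro x h h'
    by_cases hx : K' x
    · exact e2 x hx
    · rw [e3 x hx, (KK.or h').resolve_left (fun h1 => hx (h h1))]
  have pd : PD adj C s s2 := by
    refine PD_iff.2 ⟨hv2, ?_, ?_⟩
    · obtain ⟨t, ht⟩ := hne
      intro h
      have h1 := hY t ht
      have h2 := e2 _ ((k0 t).2 ht)
      rw [← h] at h2
      exact h1.1 (h2.trans h1.2.symm)
    · intro x hx
      have hKx : K' x := by by_contra h; exact hx (e3 x h).symm
      have hK := kK x hKx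
      refine lt_of_lt_of_le ((PD_iff.1 hp).2.2 x hK.1) ?_
      unfold pay
      apply Finset.card_le_card
      intro j
      simp only [Finset.mem_filter, Finset.mem_univ, true_and]
      rintro ⟨hj, hj'⟩
      refine ⟨hj, ?_⟩
      rw [e2 x hKx]
      rw [hK.2] at hj'
      apply or2 j _ hj'
      intro hKj
      rcases H.cases x with ⟨t, rfl⟩ | ⟨t, i, hi, rfl⟩
      · rw [k0] at hKx
        rcases (H.adj_sh t j).1 hj with rfl | rfl
        · exact kup t _ (by have := H.κn (t-1); omega) (by omega) (hA t hKx hKj) hKj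
        · exact kdn (t+1) _ (by rw [add_sub_cancel_right]; have := H.κ1 t; omega) (hB t hKx hKj) hKj
      · rw [k1 t i hi] at hKx
        have hj := (H.adj_ns hi j).1 hj
        subst hj
        have := hi.2.1
        rcases hKx.2 with ⟨h1, h2⟩ | ⟨h1, h2⟩
        · exact kup t _ (by omega) (by omega) h2 hKj
        · exact kdn t _ (by omega) h2 hKj
  obtain ⟨s1, r1, g1, q1⟩ := push H hset hv2 Y c (by
      intro t
      by_cases h : Y t
      · rw [if_pos h]; exact e2 _ ((k0 t).2 h)
      · rw [if_neg h]; exact e3 _ (fun h' => h ((k0 t).1 h')))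
    (by
      intro t i h1 h2
      by_cases h : K' (N t i)
      · right
        refine ⟨e2 _ h, ?_, ?_⟩
        · rcases ((k1 t i (ns_up H t h1 h2)).1 h).2 with h | h
          · exact h.2
          · omega
        · intro i' h3 h4
          exact K_mem hp (K_path H hset hp (i0 := κ (t-1)) (i := i) (fun j h1 h2 => ns_up H t h1 (by omega)) (kK _ h) i' h3.le h4)
      · left; exact e3 _ h)
    (by
      intro t i h1 h2
      by_cases h : K' (N t i)
      · right
        refine ⟨e2 _ h, ?_, ?_⟩
        · rcases ((k1 t i (ns_dn H t h1 h2)).1 h).2 with h | h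
          · omega
          · exact h.2
        · intro i' h3 h4
          exact K_mem hp (K_path H hset hp (i0 := 0) (i := i) (fun j h1 h2 => ns_dn H t h1 (by omega)) (kK _ h) i' h3.le h4)
      · left; exact e3 _ h)
  refine ⟨s1, RP.step _ _ _ _ pd r1, g1, q1, ?_⟩
  intro t y1 y2 a b
  have hall : ∀ i, i < n → KK s s' c (N t i) ∧ K' (N t i) := by
    intro i hi
    rcases Nat.lt_or_ge i (κ (t-1)) with h | h
    · have := K_B H hset hp b i h
      rw [sub_add_cancel] at this
      exact ⟨this, kdn t i h y1 this⟩
    · have := K_A H hset hp a i h hi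
      exact ⟨this, kup t i h hi y2 this⟩
  constructor
  · apply r1.mono_mono H
    intro i hi
    rw [e2 _ (hall i hi).2, e2 _ (hall 0 (by omega)).2]
  · intro hm
    have h1 := H.mono_perm hp hm 0 (by omega)
    exact (hall 0 (by omega)).1.1 h1.symm

end real

set_option linter.unusedSectionVars false
set_option linter.unusedVariables false
section real
variable {V M : Type} [Fintype V] {m n : ℕ} {adj : V → V → Prop} {N : ZMod m → ℕ → V} {κ : ZMod m → ℕ}
  {C : V → Finset M} {s s' s'' : V → M} {k l : ℕ} {c : M}

abbrev Str (adj : V → V → Prop) (C : V → Finset M) (s : V → M) : Prop :=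
  IsStrong adj (fun _ _ => 1) (fun _ _ => 0) C s

noncomputable def mc (n : ℕ) (N : ZMod m → ℕ → V) (s : V → M) : ℕ := Set.ncard {t | mono n N s t}

theorem mc_bd [NeZero m] : mc n N s ≤ m := by
  unfold mc
  have := Set.ncard_le_ncard (Set.subset_univ {t | mono n N s t}) Set.finite_univ
  rwa [Set.ncard_univ, Nat.card_zmod] at this

theorem mc_lt [NeZero m] (H : Chain m n adj N κ) (h : RP adj C k s s') (hex : ∃ t, mono n N s' t ∧ ¬ mono n N s t) :
    mc n N s < mc n N s' := by
  apply Set.ncard_lt_ncard _ (Set.toFinite _)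
  obtain ⟨t, h1, h2⟩ := hex
  exact ⟨fun x hx => h.mono_mono H hx, fun h' => h2 (h' h1)⟩

theorem all_up [NeZero m] {X : ZMod m → Prop} {t0 : ZMod m} (h0 : X t0) (h : ∀ t, X t → X (t+1)) : ∀ t, X t := by
  have : ∀ j : ℕ, X (P t0 j) := by
    intro j
    induction j with
    | zero => rw [P_zero]; exact h0
    | succ j ih => rw [← P_succ]; exact h _ ih
  intro t
  obtain ⟨i, -, rfl⟩ := P_surj t0 t
  exact this i

theorem all_dn [NeZero m] {X : ZMod m → Prop} {t0 : ZMod m} (h0 : X t0) (h : ∀ t, X t → X (t-1)) : ∀ t, X t := by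
  have := all_up (X := fun t => X (-t)) (t0 := -t0) (by simpa using h0) (fun t ht => by
    have := h _ ht
    rwa [show -t - 1 = -(t+1) by ring] at this)
  intro t
  simpa using this (-t)

theorem strong_of (H : Chain m n adj N κ) (hset : Settled n N κ C s) (hv : Valid C s)
    (h : ∀ t, (Red n N κ s).s t = (Red n N κ s).L t ∧ (Red n N κ s).s t = (Red n N κ s).R t) : Str adj C s := by
  refine ⟨hv, fun s' hp => ?_⟩
  obtain ⟨c, t, hX⟩ := K_ex H hset hp
  exact ((coal H hset hp c).F3 t hX (Or.inl (h t).1)).2.2 (h t)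

def Flag (Z : St m M) : Prop := ∃ c, (∀ t, Z.s t = c) ∧ ((∀ t, Z.L t = c) ∨ (∀ t, Z.R t = c))

theorem flag_step [NeZero m] (H : Chain m n adj N κ) (hset : Settled n N κ C s) (hv : Valid C s)
    (hF : Flag (Red n N κ s)) (hs : ¬ Str adj C s) :
    ∃ s1, RP adj C (n+1) s s1 ∧ Settled n N κ C s1 ∧ Flag (Red n N κ s1) ∧ (mc n N s < mc n N s1 ∨ Str adj C s1) := by
  have : ∃ s', PD adj C s s' := by
    by_contra h; push Not at h; exact hs ⟨hv, h⟩
  obtain ⟨s', hp⟩ := this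
  obtain ⟨c, t0, hX0⟩ := K_ex H hset hp
  have hc := coal H hset hp c
  obtain ⟨c0, f1, f2⟩ := hF
  have hne : ∀ t, KK s s' c (N t 0) → c0 ≠ c := fun t h => by
    have := (hc.F0 t h).2; rwa [f1] at this
  have hne0 := hne t0 hX0
  rcases f2 with f2 | f2
  · have q : ∀ t, KK s s' c (N t 0) → KK s s' c (N t (n-1)) := by
      intro t h
      have := (hc.F3 t h (Or.inl (by rw [f1, f2]))).1
      rw [f2] at this
      exact this.resolve_right hne0
    have hX := all_dn (X := fun t => KK s s' c (N t 0)) hX0 (fun t h => (hc.A1 t (q t h)).1)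
    obtain ⟨s1, r1, g1, q1, p1⟩ := Apply H hset hv hp c (fun _ => True) (fun t _ => hX t) ⟨t0, trivial⟩
      (fun _ _ _ => trivial) (fun _ _ _ => trivial)
    have zs : ∀ t, (Red n N κ s1).s t = c := fun t => by rw [q1]; simp [pushSt]
    have zL : ∀ t, (Red n N κ s1).L t = c := fun t => by
      rw [q1]; simp only [pushSt]; rw [if_pos ⟨trivial, (hc.A1 t (q t (hX t))).2⟩]
    refine ⟨s1, r1, g1, ⟨c, zs, Or.inl zL⟩, ?_⟩
    by_cases hB : ∃ t, KK s s' c (N (t+1) (κ t - 1))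
    · obtain ⟨t, ht⟩ := hB
      left
      exact mc_lt H r1 ⟨t+1, p1 (t+1) trivial trivial (q _ (hX _)) (by simpa using ht)⟩
    · push Not at hB
      right
      refine strong_of H g1 (r1.valid hv) (fun t => ⟨by rw [zs, zL], ?_⟩)
      rw [zs, q1]
      simp only [pushSt]
      split_ifs with h
      · rfl
      · exact (((hc.F3 t (hX t) (Or.inl (by rw [f1, f2]))).2.1).resolve_left (hB t)).symm
  · have q : ∀ t, KK s s' c (N t 0) → KK s s' c (N (t+1) (κ t - 1)) := by
      intro t h
      have := (hc.F3 t h (Or.inr (by rw [f1, f2]))).2.1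
      rw [f2] at this
      exact this.resolve_right hne0
    have hX := all_up (X := fun t => KK s s' c (N t 0)) hX0 (fun t h => (hc.B1 t (q t h)).1)
    obtain ⟨s1, r1, g1, q1, p1⟩ := Apply H hset hv hp c (fun _ => True) (fun t _ => hX t) ⟨t0, trivial⟩
      (fun _ _ _ => trivial) (fun _ _ _ => trivial)
    have zs : ∀ t, (Red n N κ s1).s t = c := fun t => by rw [q1]; simp [pushSt]
    have zR : ∀ t, (Red n N κ s1).R t = c := fun t => by
      rw [q1]; simp only [pushSt]; rw [if_pos ⟨trivial, (hc.B1 t (q t (hX t))).2⟩]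
    refine ⟨s1, r1, g1, ⟨c, zs, Or.inr zR⟩, ?_⟩
    by_cases hA : ∃ t, KK s s' c (N t (n-1))
    · obtain ⟨t, ht⟩ := hA
      left
      exact mc_lt H r1 ⟨t, p1 t trivial trivial ht (q _ (hX _))⟩
    · push Not at hA
      right
      refine strong_of H g1 (r1.valid hv) (fun t => ⟨?_, by rw [zs, zR]⟩)
      rw [zs, q1]
      simp only [pushSt]
      split_ifs with h
      · rfl
      · exact (((hc.F3 t (hX t) (Or.inr (by rw [f1, f2]))).1).resolve_left (hA t)).symm

theorem phase [NeZero m] (H : Chain m n adj N κ) (hset : Settled n N κ C s) (hv : Valid C s)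
    (hcl : ∀ t, clean (Gr n N κ C) (Red n N κ s) t) (hs : ¬ Str adj C s) :
    ∃ s1, RP adj C ((n+1) + 2*(m*m)*(n+1)) s s1 ∧ Settled n N κ C s1 ∧
      (Flag (Red n N κ s1) ∨ ((∀ t, clean (Gr n N κ C) (Red n N κ s1) t) ∧ mc n N s < mc n N s1)) := by
  have : ∃ s', PD adj C s s' := by
    by_contra h; push Not at h; exact hs ⟨hv, h⟩
  obtain ⟨s', hp⟩ := this
  obtain ⟨c, t0, hX0⟩ := K_ex H hset hp
  have hc := coal H hset hp c
  set X : ZMod m → Prop := fun t => KK s s' c (N t 0) with hXd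
  set A : ZMod m → Prop := fun t => KK s s' c (N t (n-1)) with hAd
  set B : ZMod m → Prop := fun t => KK s s' c (N (t+1) (κ t - 1)) with hBd
  have F4 : ∀ t, X t → A t ∨ B t := fun t h => hc.F4 h (hcl t)
  by_cases hall : ∀ t, X t
  · obtain ⟨s1, r1, g1, q1, p1⟩ := Apply H hset hv hp c (fun _ => True) (fun t _ => hall t) ⟨t0, trivial⟩
      (fun _ _ _ => trivial) (fun _ _ _ => trivial)
    have zs : ∀ t, (Red n N κ s1).s t = c := fun t => by rw [q1]; simp [pushSt]
    have zL : ∀ t, A t → (Red n N κ s1).L t = c := fun t h => by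
      rw [q1]; simp only [pushSt]; rw [if_pos ⟨trivial, (hc.A1 t h).2⟩]
    have zR : ∀ t, B t → (Red n N κ s1).R t = c := fun t h => by
      rw [q1]; simp only [pushSt]; rw [if_pos ⟨trivial, (hc.B1 t h).2⟩]
    refine ⟨s1, r1.mono (by omega), g1, ?_⟩
    by_cases hex : ∃ t, A t ∧ B (t-1)
    · right
      refine ⟨fun t => ?_, ?_⟩
      · rcases F4 t (hall t) with h | h
        · left; rw [zs, zL t h]
        · right; left; rw [zs, zR t h]
      · obtain ⟨t, a, b⟩ := hex
        exact mc_lt H r1 ⟨t, p1 t trivial trivial a b⟩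
    · push Not at hex
      left
      refine ⟨c, zs, ?_⟩
      by_cases hA : ∃ t, A t
      · obtain ⟨t, ht⟩ := hA
        left
        have := all_dn ht (fun t h => (F4 (t-1) (hall _)).resolve_right (hex t h))
        exact fun t => zL t (this t)
      · push Not at hA
        right
        exact fun t => zR t ((F4 t (hall t)).resolve_left (hA t))
  · have : ∃ b, X b ∧ ¬ X (b+1) := by
      by_contra h; push Not at h; exact hall (all_up hX0 h)
    obtain ⟨b, hb, hb1⟩ := this
    have hm := H.hm
    have hPb1 : P b 1 = b + 1 := by rw [← P_succ, P_zero]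
    obtain ⟨e, he, he1⟩ : ∃ e, (1 ≤ e ∧ e < m ∧ ¬ X (P b e)) ∧ ∀ j, e < j → j < m → X (P b j) := by
      have h1 : ∃ d, 1 ≤ m - 1 - d ∧ ¬ X (P b (m - 1 - d)) := ⟨m - 2, by omega, by
        rw [show m - 1 - (m-2) = 1 by omega, hPb1]; exact hb1⟩
      refine ⟨m - 1 - Nat.find h1, ⟨(Nat.find_spec h1).1, by omega, (Nat.find_spec h1).2⟩, ?_⟩
      intro j h2 h3
      by_contra h4
      have := Nat.find_min h1 (m := m - 1 - j) (by omega)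
      apply this
      rw [show m - 1 - (m - 1 - j) = j by omega]
      exact ⟨by omega, h4⟩
    obtain ⟨e1, em, eX⟩ := he
    have hXj : ∀ j, e < j → j ≤ m → X (P b j) := by
      intro j h1 h2
      by_cases h : j = m
      · rw [h, P_m]; exact hb
      · exact he1 j h1 (by omega)
    have hYP : ∀ j, e < j → j ≤ m → ¬ Iv b e (P b j) := fun j h1 h2 => not_Iv b em h1 h2
    have hYx : ∀ x, ¬ Iv b e x → ∃ j, e < j ∧ j ≤ m ∧ x = P b j := by
      intro x hx
      obtain ⟨i, hi, rfl⟩ := P_surj b x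
      by_cases h0 : i = 0
      · subst h0; exact ⟨m, em, le_rfl, by rw [P_zero, P_m]⟩
      · refine ⟨i, ?_, hi.le, rfl⟩
        by_contra h; exact hx ⟨i, by omega, by omega, rfl⟩
    have hpred : ∀ j, 1 ≤ j → P b j - 1 = P b (j-1) := by
      intro j hj
      rw [sub_eq_iff_eq_add, P_succ]; congr 1; omega
    have clA : ∀ t, ¬ Iv b e t → A t → ¬ Iv b e (t-1) := by
      intro t h a
      obtain ⟨j, h1, h2, rfl⟩ := hYx t h
      have := (hc.A1 _ a).1
      rw [hpred j (by omega)] at this ⊢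
      apply hYP _ _ (by omega)
      by_contra h3
      rw [show j - 1 = e by omega] at this
      exact eX this
    have clB : ∀ t, ¬ Iv b e t → B t → ¬ Iv b e (t+1) := by
      intro t h a
      obtain ⟨j, h1, h2, rfl⟩ := hYx t h
      have := (hc.B1 _ a).1
      by_cases hj : j = m
      · rw [hj, P_m] at this; exact absurd this hb1
      · rw [P_succ]; exact hYP _ (by omega) (by omega)
    have hYX : ∀ t, ¬ Iv b e t → X t := by
      intro t h
      obtain ⟨j, h1, h2, rfl⟩ := hYx t h
      exact hXj j h1 h2
    have hYb : ¬ Iv b e b := by have := hYP m em le_rfl; rwa [P_m] at this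
    obtain ⟨s1, r1, g1, q1, p1⟩ := Apply H hset hv hp c (fun t => ¬ Iv b e t) hYX ⟨b, hYb⟩ clA clB
    have hv1 := r1.valid hv
    obtain ⟨Z2, rz, cz⟩ := ArcRun (G := Gr n N κ C) b e em (Red n N κ s1) (fun t => hv1 _) (by
      intro i h1 h2
      have h3 := hcl (P b i)
      have i1 : Iv b e (P b i) := ⟨i, by omega, by omega, rfl⟩
      have i2 : Iv b e (P b i - 1) := by rw [hpred i (by omega)]; exact ⟨i-1, by omega, by omega, rfl⟩
      have i3 : Iv b e (P b i + 1) := by rw [P_succ]; exact ⟨i+1, by omega, by omega, rfl⟩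
      rw [q1]
      unfold clean at h3 ⊢
      simp only [pushSt]
      rw [if_neg (fun h => h i1), if_neg (fun h => h.1 i2), if_neg (fun h => h.1 i3)]
      exact h3)
    obtain ⟨s2, r2, g2, q2⟩ := sim H rz s1 hv1 g1 rfl
    refine ⟨s2, r1.trans r2, g2, Or.inr ⟨?_, ?_⟩⟩
    · intro t
      rw [q2]
      by_cases hI : Iv b e t
      · obtain ⟨i, h1, h2, rfl⟩ := hI
        exact cz i h1 h2
      · have es : Z2.s t = c := by
          rw [rz.s_eq hI, q1]; simp only [pushSt]; rw [if_pos hI]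
        rcases F4 t (hYX t hI) with h | h
        · left
          have h' := clA t hI h
          rw [es, rz.L_eq h', q1]; simp only [pushSt]; rw [if_pos ⟨h', (hc.A1 t h).2⟩]
        · right; left
          have h' := clB t hI h
          rw [es, rz.R_eq h', q1]; simp only [pushSt]; rw [if_pos ⟨h', (hc.B1 t h).2⟩]
    · refine mc_lt H (r1.trans r2) ?_
      have hAb : A b := (F4 b hb).resolve_right (fun h => hb1 (hc.B1 b h).1)
      have hj : ∃ j, e < j ∧ A (P b j) := ⟨m, em, by rw [P_m]; exact hAb⟩
      have j1 := Nat.find_spec hj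
      have j2 : Nat.find hj ≤ m := Nat.find_min' hj ⟨em, by rw [P_m]; exact hAb⟩
      have j3 : ∀ i, i < Nat.find hj → e < i → ¬ A (P b i) := fun i h1 h2 h3 => Nat.find_min hj h1 ⟨h2, h3⟩
      generalize Nat.find hj = j at j1 j2 j3
      have y1 := hYP j j1.1 j2
      have y2 := clA _ y1 j1.2
      have j4 : j - 1 ≠ e := by
        intro h
        rw [hpred j (by omega), h] at y2
        exact y2 ⟨e, e1, le_rfl, rfl⟩
      have bb : B (P b j - 1) := by
        rw [hpred j (by omega)]
        exact (F4 _ (hXj _ (by omega) (by omega))).resolve_left (j3 _ (by omega) (by omega))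
      obtain ⟨m1, m2⟩ := p1 (P b j) y1 y2 j1.2 bb
      exact ⟨P b j, r2.mono_mono H m1, m2⟩

theorem loop1 [NeZero m] (H : Chain m n adj N κ) (K1 : ℕ) (hK : n + 1 ≤ K1) : ∀ d (s : V → M), Settled n N κ C s → Valid C s →
    Flag (Red n N κ s) → m - mc n N s ≤ d → ∃ s', RP adj C ((d+1)*K1) s s' ∧ Str adj C s' := by
  intro d
  induction d with
  | zero =>
    intro s hset hv hF hd
    by_cases hs : Str adj C s
    · exact ⟨s, RP.refl _ _, hs⟩
    obtain ⟨s1, r1, g1, f1, h | h⟩ := flag_step H hset hv hF hs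
    · have := mc_bd (n := n) (N := N) (s := s1); omega
    · exact ⟨s1, r1.mono (by omega), h⟩
  | succ d ih =>
    intro s hset hv hF hd
    by_cases hs : Str adj C s
    · exact ⟨s, RP.refl _ _, hs⟩
    obtain ⟨s1, r1, g1, f1, h | h⟩ := flag_step H hset hv hF hs
    · obtain ⟨s2, r2, h2⟩ := ih s1 g1 (r1.valid hv) f1 (by omega)
      refine ⟨s2, (r1.trans r2).mono ?_, h2⟩
      rw [show (d + 1 + 1) * K1 = K1 + (d+1)*K1 by ring]; omega
    · refine ⟨s1, r1.mono ?_, h⟩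
      rw [show (d + 1 + 1) * K1 = K1 + (d+1)*K1 by ring]; omega

theorem loop2 [NeZero m] (H : Chain m n adj N κ) (K1 : ℕ) (hK : (n+1) + 2*(m*m)*(n+1) ≤ K1) : ∀ d (s : V → M), Settled n N κ C s → Valid C s →
    (∀ t, clean (Gr n N κ C) (Red n N κ s) t) → m - mc n N s ≤ d → ∃ s', RP adj C ((d+2)*K1) s s' ∧ Str adj C s' := by
  intro d
  induction d with
  | zero =>
    intro s hset hv hF hd
    by_cases hs : Str adj C s
    · exact ⟨s, RP.refl _ _, hs⟩
    obtain ⟨s1, r1, g1, h | ⟨h, h'⟩⟩ := phase H hset hv hF hs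
    · obtain ⟨s2, r2, h2⟩ := loop1 H K1 (by omega) m s1 g1 (r1.valid hv) h (by omega)
      have := mc_bd (n := n) (N := N) (s := s)
      by_cases hd0 : m - mc n N s1 ≤ 0
      · obtain ⟨s2, r2, h2⟩ := loop1 H K1 (by omega) 0 s1 g1 (r1.valid hv) h hd0
        exact ⟨s2, (r1.trans r2).mono (by omega), h2⟩
      · exfalso
        have h3 : mc n N s ≤ mc n N s1 := by
          apply Set.ncard_le_ncard _ (Set.toFinite _)
          exact fun x hx => r1.mono_mono H hx
        omega
    · have := mc_bd (n := n) (N := N) (s := s1); omega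
  | succ d ih =>
    intro s hset hv hF hd
    by_cases hs : Str adj C s
    · exact ⟨s, RP.refl _ _, hs⟩
    obtain ⟨s1, r1, g1, h | ⟨h, h'⟩⟩ := phase H hset hv hF hs
    · have h3 : mc n N s ≤ mc n N s1 := by
        apply Set.ncard_le_ncard _ (Set.toFinite _)
        exact fun x hx => r1.mono_mono H hx
      obtain ⟨s2, r2, h2⟩ := loop1 H K1 (by omega) (d+1) s1 g1 (r1.valid hv) h (by omega)
      refine ⟨s2, (r1.trans r2).mono ?_, h2⟩
      rw [show (d + 1 + 2) * K1 = K1 + (d+1+1)*K1 by ring]; omega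
    · obtain ⟨s2, r2, h2⟩ := ih s1 g1 (r1.valid hv) h (by omega)
      refine ⟨s2, (r1.trans r2).mono ?_, h2⟩
      rw [show (d + 1 + 2) * K1 = K1 + (d+2)*K1 by ring]; omega

theorem chain_main (H : Chain m n adj N κ) (hv : Valid C s) :
    ∃ L, L ≤ 60 * n * m ^ 3 ∧ CImpPath adj (fun _ _ => 1) (fun _ _ => 0) C s L := by
  have hm := H.hm
  have hn := H.hn
  have : NeZero m := ⟨by omega⟩
  obtain ⟨s1, r1, g1, -, -⟩ := settle H hv
  have hv1 := r1.valid hv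
  obtain ⟨X', rx, cx⟩ := RN (G := Gr n N κ C) hm (Red n N κ s1) (fun t => hv1 _)
  obtain ⟨s2, r2, g2, q2⟩ := sim H rx s1 hv1 g1 rfl
  obtain ⟨s3, r3, h3⟩ := loop2 H _ le_rfl m s2 g2 (r2.valid hv1) (by rw [q2]; exact cx) (by omega)
  obtain ⟨L, hL, hp⟩ := ((r1.trans r2).trans r3).to_path h3
  refine ⟨L, hL.trans ?_, hp⟩
  have a1 : n + 1 ≤ 2 * n := by omega
  have a2 : (n+1) + 2*(m*m)*(n+1) ≤ (3 * (m*m)) * (2*n) := by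
    have : 1 ≤ m * m := by nlinarith
    calc (n+1) + 2*(m*m)*(n+1) = (1 + 2*(m*m)) * (n+1) := by ring
      _ ≤ _ := Nat.mul_le_mul (by omega) a1
  have a3 : (m+2) * ((n+1) + 2*(m*m)*(n+1)) ≤ (2*m) * ((3 * (m*m)) * (2*n)) := Nat.mul_le_mul (by omega) a2
  have a4 : 20 * (m*m*m) * (n+1) ≤ 20 * (m*m*m) * (2*n) := Nat.mul_le_mul_left _ a1
  have a5 : n * 1 ≤ n * (m*m*m) := Nat.mul_le_mul_left _ (by
    have : 1 ≤ m * m := by nlinarith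
    nlinarith)
  nlinarith

theorem val_succ [NeZero m] (hm : 2 ≤ m) (t : ZMod m) :
    (t.val + 1 < m ∧ (t+1).val = t.val + 1) ∨ (t.val + 1 = m ∧ (t+1).val = 0) := by
  have : Fact (1 < m) := ⟨by omega⟩
  have h := ZMod.val_add t 1
  rw [ZMod.val_one] at h
  have h1 := ZMod.val_lt t
  rcases Nat.lt_or_ge (t.val + 1) m with h2 | h2
  · left; rw [Nat.mod_eq_of_lt h2] at h; exact ⟨h2, h⟩
  · right; have : t.val + 1 = m := by omega
    rw [this, Nat.mod_self] at h; exact ⟨this, h⟩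

theorem chain_of {node : ℕ → ℕ → V} {k : ℕ → ℕ} (h : IsClosedChain m n node k) :
    Chain m n (chainAdj m n node) (fun t : ZMod m => node t.val) (fun t : ZMod m => k t.val) := by
  obtain ⟨hm, hn, hk, h1, h2, h3, h4⟩ := h
  have : NeZero m := ⟨by omega⟩
  have key : ∀ t t' : ZMod m, (t'.val = t.val + 1 ∨ (t.val = m - 1 ∧ t'.val = 0)) → t' = t + 1 := by
    intro t t' h
    apply ZMod.val_injective m
    have := ZMod.val_lt t'
    rcases val_succ hm t with h | h <;> omega
  refine ⟨hm, hn, fun t => (hk _ (ZMod.val_lt t)).1, fun t => (hk _ (ZMod.val_lt t)).2, ?_, ?_, ?_, ?_⟩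
  · intro t
    rcases val_succ hm t with ⟨q1, q2⟩ | ⟨q1, q2⟩
    · simp only [q2]; exact h1 _ q1
    · simp only [q2]
      rw [show t.val = m - 1 by omega]; exact h2
  · intro t i t' i' hi hi' e
    rcases h3 _ _ _ _ (ZMod.val_lt t) hi (ZMod.val_lt t') hi' e with ⟨a, b⟩ | ⟨a, b, c⟩ | ⟨a, b, c⟩ | ⟨a, b, c, d⟩ | ⟨a, b, c, d⟩
    · left; exact ⟨ZMod.val_injective m a, b⟩
    · right; left; exact ⟨key _ _ (Or.inl a), b, c⟩
    · right; right; exact ⟨key _ _ (Or.inl a), b, c⟩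
    · right; left; refine ⟨key _ _ (Or.inr ⟨a, b⟩), c, ?_⟩
      simp only [a]; exact d
    · right; right; refine ⟨key _ _ (Or.inr ⟨a, b⟩), c, ?_⟩
      simp only [a]; exact d
  · intro v
    obtain ⟨j, i, hj, hi, e⟩ := h4 v
    refine ⟨(j : ZMod m), i, hi, ?_⟩
    simp only [ZMod.val_natCast, Nat.mod_eq_of_lt hj]; exact e
  · intro u v
    constructor
    · rintro ⟨j, i, hj, hi, a, b⟩
      refine ⟨(j : ZMod m), i, hi, ?_⟩
      simp only [ZMod.val_natCast, Nat.mod_eq_of_lt hj]; exact ⟨a, b⟩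
    · rintro ⟨t, i, hi, a, b⟩
      exact ⟨t.val, i, ZMod.val_lt t, hi, a, b⟩

end real

/-- There is a constant `c` such that every coordination game without bonuses
on an unweighted closed chain of `m` cycles, each cycle having `n` nodes,
admits, from every joint strategy, a finite c-improvement path of length at
most `c * n * m ^ 3` ending in a strong equilibrium. -/
theorem closed_chain_cimprovement_path :
    ∃ c : ℕ,
      ∀ (V : Type) [Fintype V] (M : Type) [Fintype M],
      ∀ (m n : ℕ) (node : ℕ → ℕ → V) (k : ℕ → ℕ),
        IsClosedChain m n node k →
      ∀ (C : V → Finset M), (∀ i, (C i).Nonempty) →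
      ∀ s : V → M, Valid C s →
        ∃ L, L ≤ c * n * m ^ 3 ∧
          CImpPath (chainAdj m n node) (fun _ _ => 1) (fun _ _ => 0) C s L := by
  refine ⟨60, ?_⟩
  intro V _ M _ m n node k h C _ s hv
  exact chain_main (chain_of h) hv

end CG
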